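/- Assume the standing assumptions (B), fix α ∈ C(Ω̄;𝕊ⁿ(θ₀)), T(ε) ∈ (0,∞], C₀ > 0 and m ∈ (0, M_α). Suppose a^ε ∈ C(Q̄_{T(ε)};𝕊ⁿ(θ₀)) satisfies a^ε(x,t) ≤ α(x) (in the order of symmetric matrices) in Q_{T(ε)}, and u^ε ∈ C(Q̄_{T(ε)}) ∩ C^{2,1}(Q_{T(ε)}) is a classical subsolution of (L) in Q_{T(ε)} (i.e. u^ε_t ≤ ε tr[a^ε(x,t)D²u^ε] + b(x)·Du^ε) with u^ε(·,0) ≤ 0 on Σ_α^m and u^ε ≤ C₀ in Q_{T(ε)}. Then for any δ > 0 there exists ε₀ ∈ (0,1) such that for all ε ∈ (0,ε₀): u^ε(0,t) ≤ δ for all t ∈ [0, min(exp((m−δ)/ε), T(ε))). -/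

import Mathlib

open Set Filter Metric Topology
open scoped ENNReal

noncomputable section

/-- `n`-dimensional Euclidean space. -/
abbrev Eu (n : ℕ) := EuclideanSpace ℝ (Fin n)

variable {n : ℕ}

/-- Euclidean dot product. -/
def dotp (x y : Eu n) : ℝ := ∑ i, x i * y i

/-- The quadratic form `A p · p` of a matrix `A`. -/
def mquad (A : Matrix (Fin n) (Fin n) ℝ) (p : Eu n) : ℝ := ∑ i, ∑ j, A i j * p i * p j

/-- `A ∈ 𝕊ⁿ(θ)`: symmetric with `θ I ≤ A ≤ θ⁻¹ I`. -/
def memS (θ : ℝ) (A : Matrix (Fin n) (Fin n) ℝ) : Prop :=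
  A.IsSymm ∧ ∀ p : Eu n, θ * ‖p‖ ^ 2 ≤ mquad A p ∧ mquad A p ≤ θ⁻¹ * ‖p‖ ^ 2

/-- order of symmetric matrices (via quadratic forms). -/
def mle (A B : Matrix (Fin n) (Fin n) ℝ) : Prop := ∀ p : Eu n, mquad A p ≤ mquad B p

/-- trace of the product `A·H`. -/
def trMul (A H : Matrix (Fin n) (Fin n) ℝ) : ℝ := ∑ i, ∑ j, A i j * H j i

/-- the Pucci maximal operator associated with `𝕊ⁿ(θ)`. -/
def pucci (θ : ℝ) (X : Matrix (Fin n) (Fin n) ℝ) : ℝ :=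
  sSup ((fun A => trMul A X) '' {A | memS θ A})

/-- time derivative of `u(x,t)`. -/
def tD (u : Eu n → ℝ → ℝ) (x : Eu n) (t : ℝ) : ℝ := deriv (u x) t

/-- spatial gradient of `u(x,t)`. -/
def sG (u : Eu n → ℝ → ℝ) (x : Eu n) (t : ℝ) : Eu n := gradient (fun y => u y t) x

/-- spatial Hessian matrix of `u(x,t)`. -/
def sH (u : Eu n → ℝ → ℝ) (x : Eu n) (t : ℝ) : Matrix (Fin n) (Fin n) ℝ :=
  fun i j => fderiv ℝ (fun y => sG u y t i) x (EuclideanSpace.single j 1)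

/-- Hessian matrix of a static function. -/
def hessS (v : Eu n → ℝ) (x : Eu n) : Matrix (Fin n) (Fin n) ℝ :=
  fun i j => fderiv ℝ (fun y => gradient v y i) x (EuclideanSpace.single j 1)

/-- closed parabolic cylinder `Q̄_T = closure Ω × [0,T]` (with `T ∈ (0,∞]`). -/
def cylC (Ω : Set (Eu n)) (T : ℝ≥0∞) : Set (Eu n × ℝ) :=
  {p | p.1 ∈ closure Ω ∧ 0 ≤ p.2 ∧ ENNReal.ofReal p.2 ≤ T}

/-- open parabolic cylinder `Q_T = Ω × (0,T)`. -/
def cylO (Ω : Set (Eu n)) (T : ℝ≥0∞) : Set (Eu n × ℝ) :=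
  {p | p.1 ∈ Ω ∧ 0 < p.2 ∧ ENNReal.ofReal p.2 < T}

/-- `u ∈ C^{2,1}(Q_T)`. -/
def C21 (u : Eu n → ℝ → ℝ) (Ω : Set (Eu n)) (T : ℝ≥0∞) : Prop :=
  (∀ x ∈ Ω, ∀ t : ℝ, 0 < t → ENNReal.ofReal t < T →
     ContDiffAt ℝ 2 (fun y => u y t) x ∧ DifferentiableAt ℝ (u x) t) ∧
  ContinuousOn (fun p : Eu n × ℝ => tD u p.1 p.2) (cylO Ω T) ∧
  ContinuousOn (fun p : Eu n × ℝ => sH u p.1 p.2) (cylO Ω T)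

/-- `u ∈ C(Q̄_T) ∩ C^{2,1}(Q_T)`. -/
def Classical21 (u : Eu n → ℝ → ℝ) (Ω : Set (Eu n)) (T : ℝ≥0∞) : Prop :=
  ContinuousOn (fun p : Eu n × ℝ => u p.1 p.2) (cylC Ω T) ∧ C21 u Ω T

/-- a coefficient field in `C(Q̄_T; 𝕊ⁿ(θ))`. -/
def MatC (θ : ℝ) (A : Eu n → ℝ → Matrix (Fin n) (Fin n) ℝ) (Ω : Set (Eu n))
    (T : ℝ≥0∞) : Prop :=
  ContinuousOn (fun p : Eu n × ℝ => A p.1 p.2) (cylC Ω T) ∧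
  ∀ p ∈ cylC Ω T, memS θ (A p.1 p.2)

/-- `u` is a classical solution of `u_t = ε tr[A D²u] + b·Du` in `Q_T`. -/
def SolveL (ε : ℝ) (A : Eu n → ℝ → Matrix (Fin n) (Fin n) ℝ) (b : Eu n → Eu n)
    (u : Eu n → ℝ → ℝ) (Ω : Set (Eu n)) (T : ℝ≥0∞) : Prop :=
  ∀ x ∈ Ω, ∀ t : ℝ, 0 < t → ENNReal.ofReal t < T →
    tD u x t = ε * trMul (A x t) (sH u x t) + dotp (b x) (sG u x t)

/-- `u` is a classical subsolution of `(L)` in `Q_T`. -/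
def SubsolL (ε : ℝ) (A : Eu n → ℝ → Matrix (Fin n) (Fin n) ℝ) (b : Eu n → Eu n)
    (u : Eu n → ℝ → ℝ) (Ω : Set (Eu n)) (T : ℝ≥0∞) : Prop :=
  ∀ x ∈ Ω, ∀ t : ℝ, 0 < t → ENNReal.ofReal t < T →
    tD u x t ≤ ε * trMul (A x t) (sH u x t) + dotp (b x) (sG u x t)

/-- `u` is a classical supersolution of `(L)` in `Q_T`. -/
def SupersolL (ε : ℝ) (A : Eu n → ℝ → Matrix (Fin n) (Fin n) ℝ) (b : Eu n → Eu n)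
    (u : Eu n → ℝ → ℝ) (Ω : Set (Eu n)) (T : ℝ≥0∞) : Prop :=
  ∀ x ∈ Ω, ∀ t : ℝ, 0 < t → ENNReal.ofReal t < T →
    ε * trMul (A x t) (sH u x t) + dotp (b x) (sG u x t) ≤ tD u x t

/-- viscosity subsolution of `H(x,Du) = 0` on `A`. -/
def ViscSub (H : Eu n → Eu n → ℝ) (A : Set (Eu n)) (u : Eu n → ℝ) : Prop :=
  ∀ φ : Eu n → ℝ, ContDiff ℝ 1 φ → ∀ x ∈ A,
    IsLocalMaxOn (fun y => u y - φ y) A x → H x (gradient φ x) ≤ 0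

/-- viscosity supersolution of `H(x,Du) = 0` on `A`. -/
def ViscSup (H : Eu n → Eu n → ℝ) (A : Set (Eu n)) (u : Eu n → ℝ) : Prop :=
  ∀ φ : Eu n → ℝ, ContDiff ℝ 1 φ → ∀ x ∈ A,
    IsLocalMinOn (fun y => u y - φ y) A x → 0 ≤ H x (gradient φ x)

/-- the Hamiltonian `H_α(x,p) = α(x) p·p + b(x)·p`. -/
def Ham (α : Eu n → Matrix (Fin n) (Fin n) ℝ) (b : Eu n → Eu n) (x p : Eu n) : ℝ :=
  mquad (α x) p + dotp (b x) p

/-- the quasi-potential `V_α`: the pointwise supremum (= maximal element) of all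
Lipschitz viscosity subsolutions of `H_α(x,Du)=0` in `Ω` vanishing at the origin. -/
def Vq (α : Eu n → Matrix (Fin n) (Fin n) ℝ) (b : Eu n → Eu n) (Ω : Set (Eu n))
    (x : Eu n) : ℝ :=
  sSup {r | ∃ u : Eu n → ℝ, (∃ K : NNReal, LipschitzOnWith K u (closure Ω)) ∧
    u 0 = 0 ∧ ViscSub (Ham α b) Ω u ∧ r = u x}

/-- `M_α = min_{∂Ω} V_α`. -/
def Mq (α : Eu n → Matrix (Fin n) (Fin n) ℝ) (b : Eu n → Eu n) (Ω : Set (Eu n)) : ℝ :=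
  sInf (Vq α b Ω '' frontier Ω)

/-- `argmin (V_α | ∂Ω)`. -/
def argminV (α : Eu n → Matrix (Fin n) (Fin n) ℝ) (b : Eu n → Eu n)
    (Ω : Set (Eu n)) : Set (Eu n) :=
  {x ∈ frontier Ω | ∀ y ∈ frontier Ω, Vq α b Ω x ≤ Vq α b Ω y}

/-- `Σ_α^m = {x ∈ Ω̄ : V_α(x) ≤ m}`. -/
def SigmaM (α : Eu n → Matrix (Fin n) (Fin n) ℝ) (b : Eu n → Eu n) (Ω : Set (Eu n))
    (m : ℝ) : Set (Eu n) :=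
  {x ∈ closure Ω | Vq α b Ω x ≤ m}

/-- `Ω` is a bounded `C¹` domain with outward unit normal `ν`. -/
def IsBdC1With (Ω : Set (Eu n)) (ν : Eu n → Eu n) : Prop :=
  IsOpen Ω ∧ Bornology.IsBounded Ω ∧
  ∃ ρ : Eu n → ℝ, ContDiff ℝ 1 ρ ∧ Ω = {x | ρ x < 0} ∧
    ∀ x ∈ frontier Ω, gradient ρ x ≠ 0 ∧ ν x = ‖gradient ρ x‖⁻¹ • gradient ρ x

/-- `X` is the flow of `b`, and the origin is globally asymptotically stable. -/
def GAS (b : Eu n → Eu n) (X : ℝ → Eu n → Eu n) : Prop :=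
  (∀ x, X 0 x = x) ∧ (∀ x t, HasDerivAt (fun s => X s x) (b (X t x)) t) ∧
  (∀ x, Tendsto (fun t => X t x) atTop (nhds 0)) ∧
  (∀ ε > (0:ℝ), ∃ δ > (0:ℝ), ∀ x : Eu n, ‖x‖ < δ → ∀ t ≥ (0:ℝ), ‖X t x‖ < ε)

/-- `Ω_δ = {x ∈ Ω : dist(x,∂Ω) > δ}`. -/
def Omd (Ω : Set (Eu n)) (δ : ℝ) : Set (Eu n) := {x ∈ Ω | δ < infDist x (frontier Ω)}

/-- `Ω^Π_δ = {x ∈ Ω̄ : dist(x, ∂Ω \ Π) > δ}`. -/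
def OmPid (Ω Pset : Set (Eu n)) (δ : ℝ) : Set (Eu n) :=
  {x ∈ closure Ω | δ < infDist x (frontier Ω \ Pset)}

/-- the standing assumptions (B). -/
structure SettingB (n : ℕ) where
  Ω : Set (Eu n)
  ν : Eu n → Eu n
  g : Eu n → ℝ
  θ₀ : ℝ
  a : Eu n → ℝ → Matrix (Fin n) (Fin n) ℝ
  b : Eu n → Eu n
  b₀ : ℝ
  r₀ : ℝ
  θ₀_mem : θ₀ ∈ Set.Ioc (0 : ℝ) 1
  domain : IsBdC1With Ω ν
  zero_mem : (0 : Eu n) ∈ Ω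
  g_cont : ContinuousOn g (closure Ω)
  a_cont : ContinuousOn (fun p : Eu n × ℝ => a p.1 p.2) (closure Ω ×ˢ Set.univ)
  a_mem : ∀ x ∈ closure Ω, ∀ c : ℝ, memS θ₀ (a x c)
  b_lip : ∃ K : NNReal, LipschitzWith K b
  b_zero : b 0 = 0
  b_gas : ∃ X : ℝ → Eu n → Eu n, GAS b X
  b_inward : ∀ x ∈ frontier Ω, dotp (b x) (ν x) < 0
  b₀_pos : 0 < b₀
  r₀_pos : 0 < r₀
  ball_sub : closedBall (0 : Eu n) r₀ ⊆ Ω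
  b_coerc : ∀ x ∈ ball (0 : Eu n) r₀, dotp (b x) x ≤ -b₀ * ‖x‖ ^ 2

namespace SettingB

variable (S : SettingB n)

/-- the quasi-potential `V^c` associated with `(a(·,c), b)`. -/
def Vc (c : ℝ) : Eu n → ℝ := Vq (fun x => S.a x c) S.b S.Ω

/-- `M(c) = min_{∂Ω} V^c`. -/
def M (c : ℝ) : ℝ := sInf (S.Vc c '' frontier S.Ω)

/-- `G(c) = {g(x) : x ∈ argmin(V^c|∂Ω)}`. -/
def Gset (c : ℝ) : Set ℝ := S.g '' argminV (fun x => S.a x c) S.b S.Ω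

/-- `G⁺(c) = max G(c)`. -/
def Gp (c : ℝ) : ℝ := sSup (S.Gset c)

/-- `G⁻(c) = min G(c)`. -/
def Gm (c : ℝ) : ℝ := sInf (S.Gset c)

/-- `c₀ = g(0)`. -/
def c0 : ℝ := S.g 0

/-- `g_min = min_{Ω̄} g`. -/
def gmin : ℝ := sInf (S.g '' closure S.Ω)

/-- `g_max = max_{Ω̄} g`. -/
def gmax : ℝ := sSup (S.g '' closure S.Ω)

/-- the crossing value `c₁`. -/
def c1 : ℝ :=
  if S.c0 ≤ S.Gp S.c0 then sInf {c | S.c0 ≤ c ∧ S.Gm c ≤ c}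
  else sSup {c | c ≤ S.c0 ∧ c ≤ S.Gp c}

/-- the function `c̄ : (0,∞) → I_g`. -/
def cbar (l : ℝ) : ℝ :=
  if l < S.M S.c0 ∨ S.c1 = S.c0 then S.c0
  else if S.c0 < S.c1 then min S.c1 (sInf {c | c ∈ Set.Icc S.c0 S.c1 ∧ S.M c = l})
  else max S.c1 (sSup {c | c ∈ Set.Icc S.c1 S.c0 ∧ S.M c = l})

/-- assumption (FK13): `G⁺(c₀) = G⁻(c₀)`. -/
def FK13 : Prop := S.Gp S.c0 = S.Gm S.c0

/-- assumption (FK12). -/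
def FK12 : Prop :=
  ∀ δ₀ > (0:ℝ), ∃ δ ∈ Set.Ioc (0:ℝ) δ₀,
    (S.c1 ≤ S.c0 ∧ S.gmin < S.c1 → S.c1 - δ < S.Gm (S.c1 - δ)) ∧
    (S.c0 ≤ S.c1 ∧ S.c1 < S.gmax → S.Gp (S.c1 + δ) < S.c1 + δ)

/-- `u` is a classical (`C(Q̄) ∩ C^{2,1}(Q)`) solution of the quasi-linear equation (QL). -/
def SolvesQL (ε : ℝ) (u : Eu n → ℝ → ℝ) : Prop :=
  Classical21 u S.Ω ⊤ ∧ SolveL ε (fun x t => S.a x (u x t)) S.b u S.Ω ⊤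

/-- the boundary condition (BC): `u = g` on the parabolic boundary of `Q`. -/
def BC (u : Eu n → ℝ → ℝ) : Prop :=
  (∀ x ∈ closure S.Ω, u x 0 = S.g x) ∧ ∀ x ∈ frontier S.Ω, ∀ t > (0:ℝ), u x t = S.g x

end SettingB

section Helpers

open MeasureTheory InnerProductSpace

/-! ### Linear algebra -/

lemma dotp_eq_inner (x y : Eu n) : dotp x y = inner ℝ x y := by
  simp [dotp, PiLp.inner_apply, mul_comm]

lemma fderiv_eq_dotp (f : Eu n → ℝ) (x v : Eu n) : fderiv ℝ f x v = dotp (gradient f x) v := by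
  rw [dotp_eq_inner, ← toDual_gradient, toDual_apply_apply]

lemma norm_gradient_eq (f : Eu n → ℝ) (x : Eu n) : ‖gradient f x‖ = ‖fderiv ℝ f x‖ := by
  rw [← toDual_gradient, LinearIsometryEquiv.norm_map]

lemma dotp_le (x y : Eu n) : dotp x y ≤ ‖x‖ * ‖y‖ := by
  rw [dotp_eq_inner]; exact real_inner_le_norm x y

lemma neg_le_dotp (x y : Eu n) : -(‖x‖ * ‖y‖) ≤ dotp x y := by
  rw [dotp_eq_inner]; exact (abs_le.1 (abs_real_inner_le_norm x y)).1

/-- bilinear form of a matrix -/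
def mbil (A : Matrix (Fin n) (Fin n) ℝ) (p q : Eu n) : ℝ := ∑ i, ∑ j, A i j * p i * q j

lemma mbil_symm {A : Matrix (Fin n) (Fin n) ℝ} (h : A.IsSymm) (p q : Eu n) :
    mbil A p q = mbil A q p := by
  unfold mbil
  rw [Finset.sum_comm]
  refine Finset.sum_congr rfl fun i _ => Finset.sum_congr rfl fun j _ => ?_
  rw [h.apply i j]; ring

lemma mquad_comb {A : Matrix (Fin n) (Fin n) ℝ} (h : A.IsSymm) (s t : ℝ) (p q : Eu n) :
    mquad A (s • p + t • q) = s ^ 2 * mquad A p + 2 * s * t * mbil A p q + t ^ 2 * mquad A q := by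
  have e : mquad A (s • p + t • q) = s ^ 2 * mquad A p + s * t * mbil A p q
      + s * t * mbil A q p + t ^ 2 * mquad A q := by
    simp only [mquad, mbil, Finset.mul_sum, ← Finset.sum_add_distrib]
    refine Finset.sum_congr rfl fun i _ => Finset.sum_congr rfl fun j _ => ?_
    simp only [PiLp.add_apply, PiLp.smul_apply, smul_eq_mul]
    ring
  rw [e, mbil_symm h q p]; ring

lemma dotp_comb (b : Eu n) (s t : ℝ) (p q : Eu n) :
    dotp b (s • p + t • q) = s * dotp b p + t * dotp b q := by
  simp only [dotp_eq_inner, inner_add_right, inner_smul_right]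

lemma memS_nonneg {θ : ℝ} (hθ : 0 < θ) {A : Matrix (Fin n) (Fin n) ℝ} (h : memS θ A) (p : Eu n) :
    0 ≤ mquad A p := le_trans (by positivity) (h.2 p).1

lemma two_mbil_le {θ : ℝ} (hθ : 0 < θ) {A : Matrix (Fin n) (Fin n) ℝ} (h : memS θ A)
    (p q : Eu n) : 2 * mbil A q p - mquad A q ≤ mquad A p := by
  have := memS_nonneg hθ h ((1:ℝ) • q + (-1:ℝ) • p)
  rw [mquad_comb h.1] at this
  linarith

/-- the Hamiltonian is convex -/
lemma Ham_convex {θ : ℝ} (hθ : 0 < θ) (α : Eu n → Matrix (Fin n) (Fin n) ℝ) (b : Eu n → Eu n)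
    (x : Eu n) (h : memS θ (α x)) (p q : Eu n) (l : ℝ) (h0 : 0 ≤ l) (h1 : l ≤ 1) :
    Ham α b x ((1 - l) • p + l • q) ≤ (1 - l) * Ham α b x p + l * Ham α b x q := by
  unfold Ham
  rw [mquad_comb h.1, dotp_comb]
  have h2 := two_mbil_le hθ h q p
  nlinarith [mul_nonneg h0 (sub_nonneg.2 h1)]

/-- as linear functional in `p` -/
lemma exists_vec (A : Matrix (Fin n) (Fin n) ℝ) (q c : Eu n) :
    ∃ v : Eu n, ∀ p, dotp p v = 2 * mbil A q p + dotp c p := by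
  refine ⟨WithLp.toLp 2 (fun j => 2 * ∑ i, A i j * q i + c j), fun p => ?_⟩
  unfold dotp mbil
  rw [Finset.sum_comm, Finset.mul_sum, ← Finset.sum_add_distrib]
  refine Finset.sum_congr rfl fun j _ => ?_
  simp only [← Finset.sum_mul]
  ring

lemma trMul_nonpos {θ : ℝ} (hθ : 0 < θ) {A H : Matrix (Fin n) (Fin n) ℝ} (h : memS θ A)
    (hH : ∀ p : Eu n, mquad H p ≤ 0) : trMul A H ≤ 0 := by
  have hA : A.PosSemidef := by
    refine Matrix.PosSemidef.of_dotProduct_mulVec_nonneg ?_ ?_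
    · rw [Matrix.IsHermitian, Matrix.conjTranspose_eq_transpose_of_trivial]; exact h.1
    · intro x
      have := memS_nonneg hθ h (WithLp.toLp 2 x)
      have e : star x ⬝ᵥ A.mulVec x = mquad A (WithLp.toLp 2 x) := by
        simp only [dotProduct, Matrix.mulVec, mquad, Finset.mul_sum, star_trivial]
        refine Finset.sum_congr rfl fun i _ => Finset.sum_congr rfl fun j _ => ?_
        ring
      rw [e]; exact this
  obtain ⟨B, hB⟩ : ∃ B : Matrix (Fin n) (Fin n) ℝ, A = B.conjTranspose * B := by
    open scoped MatrixOrder in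
    exact CStarAlgebra.nonneg_iff_eq_star_mul_self.mp hA.nonneg
  have : trMul A H = ∑ k, mquad H (WithLp.toLp 2 (B k)) := by
    simp only [trMul, mquad, hB, Matrix.mul_apply, Matrix.conjTranspose_apply, star_trivial,
      Finset.sum_mul]
    rw [Finset.sum_comm]
    have : ∀ y x : Fin n, ∑ i, B i x * B i y * H y x = ∑ i, H y x * B i y * B i x := fun y x =>
      Finset.sum_congr rfl fun i _ => by ring
    simp only [this]
    rw [Finset.sum_comm]
    conv_lhs => rw [Finset.sum_comm]
    rw [Finset.sum_congr rfl fun y _ => Finset.sum_comm]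
    rw [Finset.sum_comm]
  rw [this]
  exact Finset.sum_nonpos fun k _ => hH _

lemma trMul_le_trMul {θ : ℝ} (hθ : 0 < θ) {A H H' : Matrix (Fin n) (Fin n) ℝ} (h : memS θ A)
    (hH : ∀ p : Eu n, mquad H p ≤ mquad H' p) : trMul A H ≤ trMul A H' := by
  have := trMul_nonpos (H := H - H') hθ h (fun p => by
    have : mquad (H - H') p = mquad H p - mquad H' p := by
      simp only [mquad, Matrix.sub_apply, sub_mul, Finset.sum_sub_distrib]
    rw [this]; linarith [hH p])
  have e : trMul A (H - H') = trMul A H - trMul A H' := by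
      simp only [trMul, Matrix.sub_apply, mul_sub, Finset.sum_sub_distrib]
  linarith

/-- value of trMul on `c • I + d • q qᵀ` -/
lemma trMul_model (A : Matrix (Fin n) (Fin n) ℝ) (c d : ℝ) (q : Eu n) :
    trMul A (fun i j => c * (if i = j then 1 else 0) + d * (q i * q j))
      = c * ∑ i, A i i + d * mquad A q := by
  simp only [trMul, mquad, mul_add, Finset.sum_add_distrib, Finset.mul_sum]
  congr 1
  · refine Finset.sum_congr rfl fun i _ => ?_
    simp [mul_comm]
  · refine Finset.sum_congr rfl fun i _ => Finset.sum_congr rfl fun j _ => ?_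
    ring

lemma mquad_model (c d : ℝ) (q p : Eu n) :
    mquad (fun i j => c * (if i = j then 1 else 0) + d * (q i * q j)) p
      = c * ‖p‖ ^ 2 + d * (dotp q p) ^ 2 := by
  have h1 : ‖p‖ ^ 2 = ∑ i, p i * p i := by
    rw [← real_inner_self_eq_norm_sq, ← dotp_eq_inner]; rfl
  have h2 : (dotp q p) ^ 2 = ∑ i, ∑ j, (q i * p i) * (q j * p j) := by
    rw [sq]; unfold dotp; rw [Finset.sum_mul_sum]
  rw [h1, h2]
  simp only [mquad, add_mul, Finset.sum_add_distrib, Finset.mul_sum]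
  congr 1
  · refine Finset.sum_congr rfl fun i _ => ?_
    simp [mul_assoc]
  · refine Finset.sum_congr rfl fun i _ => Finset.sum_congr rfl fun j _ => ?_
    ring

lemma mquad_single (A : Matrix (Fin n) (Fin n) ℝ) (i : Fin n) :
    mquad A (EuclideanSpace.single i 1) = A i i := by
  simp [mquad, Pi.single_apply]

lemma trace_le {θ : ℝ} {A : Matrix (Fin n) (Fin n) ℝ} (h : memS θ A) :
    ∑ i, A i i ≤ n * θ⁻¹ := by
  calc ∑ i, A i i ≤ ∑ _i : Fin n, θ⁻¹ := Finset.sum_le_sum fun i _ => by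
        have := (h.2 (EuclideanSpace.single i 1)).2
        rw [mquad_single] at this; simpa using this
    _ = n * θ⁻¹ := by simp

/-! ### Mollification -/

lemma mollify (f : Eu n → ℝ) (K : NNReal) (hf : LipschitzWith K f) (r : ℝ) (hr : 0 < r) :
    ∃ W : Eu n → ℝ, ContDiff ℝ 2 W ∧ (∀ x, |W x - f x| ≤ K * r) ∧
      ∀ x v C, (∀ᵐ z, z ∈ ball x r → fderiv ℝ f z v ≤ C) → fderiv ℝ W x v ≤ C := by
  let φ : ContDiffBump (0 : Eu n) := ⟨r / 2, r, by positivity, by linarith⟩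
  let ρ : Eu n → ℝ := φ.normed volume
  have hρc : Continuous ρ := φ.continuous_normed
  have hρs : HasCompactSupport ρ := φ.hasCompactSupport_normed
  have hρi : Integrable ρ := φ.integrable_normed
  have hρ0 : ∀ x, 0 ≤ ρ x := φ.nonneg_normed
  have hρ1 : ∫ x, ρ x = 1 := φ.integral_normed
  refine ⟨convolution ρ f (ContinuousLinearMap.lsmul ℝ ℝ) volume, ?_, ?_, ?_⟩
  · exact hρs.contDiff_convolution_left _ (n := 2) φ.contDiff_normed
      hf.continuous.locallyIntegrable
  · intro x
    have := φ.dist_normed_convolution_le (μ := volume) (x₀ := x) (ε := K * r) (g := f)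
      hf.continuous.aestronglyMeasurable (fun y hy => by
        refine (hf.dist_le_mul y x).trans ?_
        gcongr
        exact (mem_ball.1 hy).le)
    rwa [Real.dist_eq] at this
  · intro x v C hC
    have hdiff : ∀ᵐ t : Eu n, DifferentiableAt ℝ f (x - t) := by
      have := (Measure.measurePreserving_sub_left (volume : Measure (Eu n)) x).quasiMeasurePreserving.ae
        hf.ae_differentiableAt
      exact this
    have hC' : ∀ᵐ t : Eu n, (x - t) ∈ ball x r → fderiv ℝ f (x - t) v ≤ C :=
      (Measure.measurePreserving_sub_left (volume : Measure (Eu n)) x).quasiMeasurePreserving.ae hC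
    have hmeas : Measurable fun t => fderiv ℝ f (x - t) :=
      (measurable_fderiv ℝ f).comp (measurable_const.sub measurable_id)
    have key := hasFDerivAt_integral_of_dominated_loc_of_lip' (𝕜 := ℝ) (μ := volume)
      (F := fun y t => ρ t • f (y - t)) (F' := fun t => ρ t • fderiv ℝ f (x - t)) (x₀ := x)
      (s := univ) (bound := fun t => ρ t * K) univ_mem
      (fun y _ => (hρc.smul (hf.continuous.comp (continuous_const.sub continuous_id))).aestronglyMeasurable)
      ((hρc.smul (hf.continuous.comp (continuous_const.sub continuous_id))).integrable_of_hasCompactSupport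
        hρs.smul_right)
      (hρc.aestronglyMeasurable.smul hmeas.aestronglyMeasurable)
      (by
        refine Eventually.of_forall fun t y _ => ?_
        rw [← smul_sub, norm_smul, Real.norm_of_nonneg (hρ0 t), mul_assoc]
        refine mul_le_mul_of_nonneg_left ?_ (hρ0 t)
        have := hf.dist_le_mul (y - t) (x - t)
        rwa [dist_eq_norm, dist_eq_norm, sub_sub_sub_cancel_right] at this)
      (hρi.mul_const _)
      (by
        filter_upwards [hdiff] with t ht
        have h1 : HasFDerivAt (fun y => f (y - t)) (fderiv ℝ f (x - t)) x := by
          have h0 := HasFDerivAt.comp x (f := fun y : Eu n => y - t) ht.hasFDerivAt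
            ((hasFDerivAt_id x).sub_const t)
          rw [ContinuousLinearMap.comp_id] at h0
          exact h0
        exact h1.const_smul (ρ t))
    have e : convolution ρ f (ContinuousLinearMap.lsmul ℝ ℝ) volume
        = fun y => ∫ t, ρ t • f (y - t) := by
      ext y; simp [convolution_def]
    rw [e, key.2.fderiv, ContinuousLinearMap.integral_apply key.1]
    have hintg : Integrable fun t => (ρ t • fderiv ℝ f (x - t)) v :=
      (ContinuousLinearMap.apply ℝ ℝ v).integrable_comp key.1
    calc ∫ t, (ρ t • fderiv ℝ f (x - t)) v ≤ ∫ t, ρ t * C := by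
          refine integral_mono_ae hintg (hρi.mul_const _) ?_
          filter_upwards [hC'] with t ht
          by_cases h : t ∈ ball (0 : Eu n) r
          · simp only [FunLike.coe_smul, Pi.smul_apply, smul_eq_mul]
            refine mul_le_mul_of_nonneg_left (ht ?_) (hρ0 t)
            simpa [mem_ball, dist_eq_norm] using h
          · have : ρ t = 0 := by
              by_contra h0
              apply h
              have : t ∈ Function.support ρ := h0
              rwa [show Function.support ρ = ball 0 r from φ.support_normed_eq] at this
            simp [this]
      _ = C := by rw [integral_mul_const, hρ1, one_mul]

/-- Jensen for the mollification. -/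
lemma mollify_Ham {θ : ℝ} (hθ : 0 < θ) (α : Eu n → Matrix (Fin n) (Fin n) ℝ) (b : Eu n → Eu n)
    {f W : Eu n → ℝ} {x : Eu n} {r : ℝ} (h : memS θ (α x))
    (hW : ∀ v C, (∀ᵐ z, z ∈ ball x r → fderiv ℝ f z v ≤ C) → fderiv ℝ W x v ≤ C) (C : ℝ)
    (hf : ∀ᵐ z, z ∈ ball x r → Ham α b x (gradient f z) ≤ C) :
    Ham α b x (gradient W x) ≤ C := by
  set q := gradient W x with hq
  obtain ⟨v, hv⟩ := exists_vec (α x) q (b x)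
  have := hW v (mquad (α x) q + C) (by
    filter_upwards [hf] with z hz hzb
    have h1 := hz hzb
    rw [fderiv_eq_dotp, hv]
    have h2 := two_mbil_le hθ h (gradient f z) q
    unfold Ham at h1
    linarith)
  rw [fderiv_eq_dotp, hv, ← hq] at this
  have e : mbil (α x) q q = mquad (α x) q := rfl
  unfold Ham
  linarith

lemma continuousOn_Ham {α : Eu n → Matrix (Fin n) (Fin n) ℝ} {b : Eu n → Eu n} {s : Set (Eu n)}
    (hα : ContinuousOn α s) (hb : Continuous b) :
    ContinuousOn (fun z : Eu n × Eu n => Ham α b z.1 z.2) (s ×ˢ univ) := by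
  have h1 : ContinuousOn (fun z : Eu n × Eu n => α z.1) (s ×ˢ univ) :=
    hα.comp continuousOn_fst (fun z hz => hz.1)
  unfold Ham mquad dotp
  refine ContinuousOn.add ?_ ?_
  · refine continuousOn_finsetSum _ fun i _ => continuousOn_finsetSum _ fun j _ => ?_
    refine (ContinuousOn.mul ?_ ?_).mul ?_
    · exact (continuous_apply_apply i j).comp_continuousOn h1
    · exact Continuous.continuousOn (by fun_prop)
    · exact Continuous.continuousOn (by fun_prop)
  · exact Continuous.continuousOn (by fun_prop)

/-- a viscosity subsolution satisfies the inequality at points of differentiability -/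
lemma visc_diff {Ω : Set (Eu n)} (hΩ : IsOpen Ω) {α : Eu n → Matrix (Fin n) (Fin n) ℝ}
    {b : Eu n → Eu n} (hα : ContinuousOn α Ω) (hb : Continuous b) {f : Eu n → ℝ}
    (hfc : Continuous f) (hf : ViscSub (Ham α b) Ω f) {x : Eu n} (hx : x ∈ Ω)
    (hd : DifferentiableAt ℝ f x) : Ham α b x (gradient f x) ≤ 0 := by
  set p := gradient f x with hp
  -- approximate points
  have key : ∀ η > (0:ℝ), ∃ y q, y ∈ Ω ∧ dist y x ≤ η ∧ dist q p ≤ 2 * η ∧ Ham α b y q ≤ 0 := by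
    intro η hη
    obtain ⟨R, hR, hRΩ⟩ := Metric.isOpen_iff.1 hΩ x hx
    have hlit := hd.hasFDerivAt.isLittleO
    have h2 := hlit.def (half_pos hη)
    obtain ⟨R', hR', hR'2⟩ := Metric.eventually_nhds_iff.1 h2
    obtain ⟨ρ, hρ0, hρ⟩ : ∃ ρ > 0, ρ < min R (min R' η) :=
      exists_between (lt_min hR (lt_min hR' hη)) |>.imp fun _ h => ⟨h.1, h.2⟩
    have hρR : ρ < R := hρ.trans_le (min_le_left _ _)
    have hρR' : ρ < R' := hρ.trans_le ((min_le_right _ _).trans (min_le_left _ _))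
    have hρη : ρ < η := hρ.trans_le ((min_le_right _ _).trans (min_le_right _ _))
    let φ : Eu n → ℝ := fun y => inner ℝ p y + (η / ρ) * ‖y - x‖ ^ 2
    have hφ : ContDiff ℝ 1 φ := by
      refine (contDiff_const.inner ℝ contDiff_id).add (contDiff_const.mul ?_)
      exact (contDiff_id.sub contDiff_const).norm_sq ℝ
    have hgrad : ∀ y, gradient φ y = p + (2 * (η / ρ)) • (y - x) := by
      intro y
      apply HasGradientAt.gradient
      rw [hasGradientAt_iff_hasFDerivAt]
      have h1 : HasFDerivAt (fun y : Eu n => inner ℝ p y) (toDual ℝ (Eu n) p) y :=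
        (toDual ℝ (Eu n) p).hasFDerivAt
      have h2 : HasFDerivAt (fun y : Eu n => ‖y - x‖ ^ 2) (2 • innerSL ℝ (y - x)) y := by
        simpa using ((hasFDerivAt_id y).sub_const x).norm_sq
      have e : toDual ℝ (Eu n) (p + (2 * (η / ρ)) • (y - x))
          = toDual ℝ (Eu n) p + (η / ρ) • (2 • innerSL ℝ (y - x)) := by
        ext v
        simp [inner_add_left, inner_smul_left, inner_sub_left]
        ring
      rw [e]
      exact h1.add (h2.const_mul (η / ρ))
    obtain ⟨y, hyB, hymax⟩ := (isCompact_closedBall x ρ).exists_isMaxOn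
      ⟨x, mem_closedBall_self hρ0.le⟩ ((hfc.sub hφ.continuous).continuousOn (s := closedBall x ρ))
    have hyx : f x - φ x ≤ f y - φ y := hymax (mem_closedBall_self hρ0.le)
    have hylt : dist y x < ρ := by
      refine lt_of_le_of_ne hyB fun heq => ?_
      have h3 := hR'2 (show dist y x < R' by rw [heq]; exact hρR')
      rw [fderiv_eq_dotp, dotp_eq_inner, ← hp, ← dist_eq_norm y x, heq, inner_sub_right] at h3
      have h4 := (le_abs_self _).trans h3
      simp only [φ, sub_self, norm_zero, ← dist_eq_norm y x, heq] at hyx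
      have h5 : η / ρ * ρ ^ 2 = η * ρ := by field_simp
      rw [h5] at hyx
      nlinarith [mul_pos hη hρ0]
    refine ⟨y, gradient φ y, hRΩ (mem_ball.2 (hylt.trans hρR)), (hylt.trans hρη).le, ?_, ?_⟩
    · rw [hgrad, dist_eq_norm, add_sub_cancel_left, norm_smul, Real.norm_of_nonneg (by positivity),
        ← dist_eq_norm]
      calc 2 * (η / ρ) * dist y x ≤ 2 * (η / ρ) * ρ := by gcongr
        _ = 2 * η := by field_simp
    · refine hf φ hφ y (hRΩ (mem_ball.2 (hylt.trans hρR))) ?_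
      have : IsLocalMax (fun y => f y - φ y) y := by
        refine hymax.isLocalMax ?_
        exact mem_of_superset (isOpen_ball.mem_nhds (mem_ball.2 hylt)) ball_subset_closedBall
      exact this.on Ω
  by_contra hcon
  push Not at hcon
  have hc := continuousOn_Ham hα hb (x, p) ⟨hx, mem_univ _⟩
  have hev := hc.eventually (lt_mem_nhds hcon)
  rw [eventually_nhdsWithin_iff, Metric.eventually_nhds_iff] at hev
  obtain ⟨e, he, hev⟩ := hev
  obtain ⟨y, q, hy, hyx, hqp, hH⟩ := key (e / 4) (by positivity)
  have := hev (y := (y, q)) (by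
    rw [Prod.dist_eq]; exact max_lt (by simp only; linarith) (by simp only; linarith)) ⟨hy, mem_univ _⟩
  linarith

/-! ### Class of subsolutions -/

/-- globally Lipschitz viscosity subsolutions vanishing at the origin -/
def Cls (α : Eu n → Matrix (Fin n) (Fin n) ℝ) (b : Eu n → Eu n) (Ω : Set (Eu n))
    (f : Eu n → ℝ) : Prop :=
  (∃ K : NNReal, LipschitzWith K f) ∧ f 0 = 0 ∧ ViscSub (Ham α b) Ω f

lemma Ham_zero (α : Eu n → Matrix (Fin n) (Fin n) ℝ) (b : Eu n → Eu n) (x : Eu n) :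
    Ham α b x 0 = 0 := by simp [Ham, mquad, dotp]

lemma Cls_zero {α : Eu n → Matrix (Fin n) (Fin n) ℝ} {b : Eu n → Eu n} {Ω : Set (Eu n)}
    (hΩ : IsOpen Ω) : Cls α b Ω (fun _ => 0) := by
  refine ⟨⟨0, LipschitzWith.const 0⟩, rfl, ?_⟩
  intro φ _ x hx hmax
  have h1 : IsLocalMax (fun y => (0:ℝ) - φ y) x := hmax.isLocalMax (hΩ.mem_nhds hx)
  have h2 : IsLocalMin φ x := by
    have := h1.neg
    simpa using this
  have : gradient φ x = 0 := by
    rw [gradient, h2.fderiv_eq_zero]; simp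
  rw [this, Ham_zero]

lemma Cls_max {α : Eu n → Matrix (Fin n) (Fin n) ℝ} {b : Eu n → Eu n} {Ω : Set (Eu n)}
    {f g : Eu n → ℝ} (hf : Cls α b Ω f) (hg : Cls α b Ω g) :
    Cls α b Ω (fun x => max (f x) (g x)) := by
  obtain ⟨⟨K, hK⟩, hf0, hfv⟩ := hf
  obtain ⟨⟨K', hK'⟩, hg0, hgv⟩ := hg
  refine ⟨⟨max K K', hK.max hK'⟩, by simp [hf0, hg0], ?_⟩
  intro φ hφ x hx hmax
  rcases le_total (f x) (g x) with h | h
  · refine hgv φ hφ x hx ?_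
    filter_upwards [hmax] with y hy
    simp only [max_eq_right h] at hy
    linarith [le_max_right (f y) (g y)]
  · refine hfv φ hφ x hx ?_
    filter_upwards [hmax] with y hy
    simp only [max_eq_left h] at hy
    linarith [le_max_left (f y) (g y)]

lemma grad_bound {θ B : ℝ} (hθ : 0 < θ) (hB : 0 ≤ B) {α : Eu n → Matrix (Fin n) (Fin n) ℝ}
    {b : Eu n → Eu n} {x p : Eu n} (h : memS θ (α x)) (hb : ‖b x‖ ≤ B)
    (hH : Ham α b x p ≤ 0) : ‖p‖ ≤ B / θ := by
  unfold Ham at hH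
  have h1 := (h.2 p).1
  have h2 := neg_le_dotp (b x) p
  rw [le_div_iff₀ hθ]
  have h3 : ‖b x‖ * ‖p‖ ≤ B * ‖p‖ := by gcongr
  by_contra hc
  push Not at hc
  have hp : 0 < ‖p‖ := by
    by_contra h0
    have : ‖p‖ = 0 := le_antisymm (not_lt.1 h0) (norm_nonneg _)
    rw [this] at hc; linarith
  nlinarith

lemma equiLip {θ B : ℝ} (hθ : 0 < θ) (hB : 0 ≤ B) {α : Eu n → Matrix (Fin n) (Fin n) ℝ}
    {b : Eu n → Eu n} {Ω : Set (Eu n)} (hΩ : IsOpen Ω) (hα : ContinuousOn α Ω)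
    (hb : Continuous b) (hm : ∀ x ∈ Ω, memS θ (α x)) (hbB : ∀ x ∈ Ω, ‖b x‖ ≤ B)
    {f : Eu n → ℝ} (hf : Cls α b Ω f) {y : Eu n} {R : ℝ} (hR : 0 < R) (hball : ball y R ⊆ Ω)
    {x x' : Eu n} (hx : x ∈ ball y (R / 2)) (hx' : x' ∈ ball y (R / 2)) :
    |f x - f x'| ≤ B / θ * dist x x' := by
  obtain ⟨⟨K, hK⟩, hf0, hfv⟩ := hf
  refine le_of_forall_pos_le_add fun e he => ?_
  set r := min (R / 2) (e / (2 * (K + 1))) with hr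
  have hr0 : 0 < r := lt_min (by positivity) (by positivity)
  have hKr : K * r ≤ e / 2 := by
    calc (K:ℝ) * r ≤ (K + 1) * (e / (2 * (K + 1))) := by
          gcongr
          · linarith
          · exact min_le_right _ _
      _ = e / 2 := by field_simp
  obtain ⟨W, hW2, hWf, hWd⟩ := mollify f K hK r hr0
  have hBθ : 0 ≤ B / θ := by positivity
  have hd : ∀ z ∈ ball y (R / 2), ‖fderiv ℝ W z‖ ≤ B / θ := by
    intro z hz
    have h1 : ∀ v, fderiv ℝ W z v ≤ B / θ * ‖v‖ := by
      intro v
      refine hWd z v _ ?_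
      filter_upwards [hK.ae_differentiableAt] with w hw hwz
      have hwΩ : w ∈ Ω := by
        apply hball
        rw [mem_ball] at *
        calc dist w y ≤ dist w z + dist z y := dist_triangle _ _ _
          _ < R / 2 + R / 2 := add_lt_add (hwz.trans_le (min_le_left _ _)) hz
          _ = R := by ring
      have h2 := grad_bound hθ hB (hm w hwΩ) (hbB w hwΩ)
        (visc_diff hΩ hα hb hK.continuous hfv hwΩ hw)
      rw [fderiv_eq_dotp]
      exact (dotp_le _ _).trans (by gcongr)
    refine ContinuousLinearMap.opNorm_le_bound _ hBθ fun v => ?_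
    rw [Real.norm_eq_abs, abs_le]
    have h2 := h1 (-v)
    rw [map_neg, norm_neg] at h2
    exact ⟨by linarith, h1 v⟩
  have h3 := (convex_ball y (R / 2)).norm_image_sub_le_of_norm_fderiv_le (𝕜 := ℝ) (f := W)
    (fun z _ => (hW2.differentiable (by norm_num)) z) hd hx' hx
  rw [Real.norm_eq_abs, ← dist_eq_norm] at h3
  have h4 := abs_le.1 h3
  have h5 := abs_le.1 (hWf x)
  have h6 := abs_le.1 (hWf x')
  rw [abs_le]
  constructor <;> linarith [h4.1, h4.2, h5.1, h5.2, h6.1, h6.2]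

lemma exists_Cls_of_lt {α : Eu n → Matrix (Fin n) (Fin n) ℝ} {b : Eu n → Eu n} {Ω : Set (Eu n)}
    (hΩ : IsOpen Ω) (h0 : (0 : Eu n) ∈ Ω) {x : Eu n} (hx : x ∈ closure Ω) {m : ℝ}
    (h : m < Vq α b Ω x) : ∃ f, Cls α b Ω f ∧ m < f x := by
  unfold Vq at h
  have hne : {r | ∃ u : Eu n → ℝ, (∃ K : NNReal, LipschitzOnWith K u (closure Ω)) ∧
    u 0 = 0 ∧ ViscSub (Ham α b) Ω u ∧ r = u x}.Nonempty :=
    ⟨0, fun _ => 0, ⟨0, (LipschitzWith.const 0).lipschitzOnWith⟩, rfl, (Cls_zero hΩ).2.2, rfl⟩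
  obtain ⟨r, ⟨u, ⟨K, hK⟩, hu0, huv, rfl⟩, hr⟩ := exists_lt_of_lt_csSup hne h
  obtain ⟨f, hf, hfu⟩ := hK.extend_real
  refine ⟨f, ⟨⟨K, hf⟩, ?_, ?_⟩, ?_⟩
  · rw [← hfu (subset_closure h0), hu0]
  · intro φ hφ z hz hmax
    refine huv φ hφ z hz ?_
    filter_upwards [hmax, self_mem_nhdsWithin] with w hw hwΩ
    rw [hfu (subset_closure hz), hfu (subset_closure hwΩ)]
    exact hw
  · rwa [← hfu hx]

lemma exists_U0 {θ B : ℝ} (hθ : 0 < θ) (hB : 0 ≤ B) {α : Eu n → Matrix (Fin n) (Fin n) ℝ}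
    {b : Eu n → Eu n} {Ω : Set (Eu n)} (hΩ : IsOpen Ω) (hΩb : Bornology.IsBounded Ω)
    (h0 : (0 : Eu n) ∈ Ω) (hα : ContinuousOn α Ω)
    (hb : Continuous b) (hm : ∀ x ∈ Ω, memS θ (α x)) (hbB : ∀ x ∈ Ω, ‖b x‖ ≤ B)
    {m d : ℝ} (hd : 0 < d) (hfr : ∀ x ∈ frontier Ω, m < Vq α b Ω x) :
    ∃ f, Cls α b Ω f ∧ ∀ x ∈ closure Ω, m < Vq α b Ω x → m - d ≤ f x := by
  have hc : IsCompact (closure Ω) := hΩb.isCompact_closure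
  refine hc.induction_on (p := fun s => ∃ f, Cls α b Ω f ∧ ∀ x ∈ s, m < Vq α b Ω x → m - d ≤ f x)
    ?_ ?_ ?_ ?_
  · exact ⟨_, Cls_zero hΩ, by simp⟩
  · rintro s t hst ⟨f, hf, h⟩
    exact ⟨f, hf, fun x hx => h x (hst hx)⟩
  · rintro s t ⟨f, hf, h⟩ ⟨g, hg, h'⟩
    refine ⟨_, Cls_max hf hg, ?_⟩
    rintro x (hx | hx) hV
    · exact (h x hx hV).trans (le_max_left _ _)
    · exact (h' x hx hV).trans (le_max_right _ _)
  · intro x hx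
    by_cases hxΩ : x ∈ Ω
    · obtain ⟨R, hR, hball⟩ := Metric.isOpen_iff.1 hΩ x hxΩ
      set s := min (R / 2) (d * θ / (2 * (B + 1))) with hs
      have hs0 : 0 < s := lt_min (by positivity) (by positivity)
      refine ⟨ball x s, mem_nhdsWithin_of_mem_nhds (ball_mem_nhds x hs0), ?_⟩
      by_cases hex : ∃ y ∈ ball x s, m < Vq α b Ω y
      · obtain ⟨y, hy, hVy⟩ := hex
        have hsub : ball x s ⊆ ball x (R / 2) := ball_subset_ball (min_le_left _ _)
        obtain ⟨f, hf, hfy⟩ := exists_Cls_of_lt hΩ h0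
          (subset_closure (hball (ball_subset_ball (by linarith) (hsub hy)))) hVy
        refine ⟨f, hf, fun z hz _ => ?_⟩
        have h1 := abs_le.1 (equiLip hθ hB hΩ hα hb hm hbB hf hR hball (hsub hz) (hsub hy))
        have h2 : dist z y ≤ 2 * (d * θ / (2 * (B + 1))) := by
          have := dist_triangle_right z y x
          rw [mem_ball] at hz hy
          have h3 := min_le_right (R / 2) (d * θ / (2 * (B + 1)))
          linarith
        have h4 : B / θ * dist z y ≤ d := by
          calc B / θ * dist z y ≤ (B + 1) / θ * (2 * (d * θ / (2 * (B + 1)))) := by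
                gcongr; linarith
            _ = d := by field_simp
        linarith [h1.1]
      · push Not at hex
        exact ⟨_, Cls_zero hΩ, fun z hz hV => absurd hV (not_lt.2 (hex z hz))⟩
    · have hxf : x ∈ frontier Ω := ⟨hx, by rwa [hΩ.interior_eq]⟩
      obtain ⟨f, hf, hfx⟩ := exists_Cls_of_lt hΩ h0 hx (hfr x hxf)
      obtain ⟨K, hK⟩ := hf.1
      refine ⟨{z | m < f z}, mem_nhdsWithin_of_mem_nhds
        ((isOpen_lt continuous_const hK.continuous).mem_nhds hfx), f, hf, fun z hz _ => ?_⟩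
      have : m < f z := hz
      linarith

/-! ### A Lipschitz Lyapunov function -/

lemma flow_lip {b : Eu n → Eu n} {K : NNReal} (hb : LipschitzWith K b)
    {f g : ℝ → Eu n} (hf : ∀ t, HasDerivAt f (b (f t)) t) (hg : ∀ t, HasDerivAt g (b (g t)) t)
    {t : ℝ} (ht : 0 ≤ t) : dist (f t) (g t) ≤ dist (f 0) (g 0) * Real.exp (K * t) := by
  have := dist_le_of_trajectories_ODE (v := fun _ => b) (K := K) (f := f) (g := g) (a := 0) (b := t)
    (δ := dist (f 0) (g 0)) (fun _ => hb)
    (fun s _ => (hf s).continuousAt.continuousWithinAt) (fun s _ => (hf s).hasDerivWithinAt)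
    (fun s _ => (hg s).continuousAt.continuousWithinAt) (fun s _ => (hg s).hasDerivWithinAt)
    le_rfl t ⟨ht, le_rfl⟩
  simpa using this

lemma flow_semi {b : Eu n → Eu n} {K : NNReal} (hb : LipschitzWith K b)
    {X : ℝ → Eu n → Eu n} (hX : GAS b X) (x : Eu n) (h : ℝ) {t : ℝ} (ht : 0 ≤ t) :
    X (t + h) x = X t (X h x) := by
  obtain ⟨h0, hd, -, -⟩ := hX
  have := flow_lip hb (f := fun s => X (s + h) x) (g := fun s => X s (X h x))
    (fun s => by
      have := (hd x (s + h)).comp_add_const s h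
      exact this) (hd _) ht
  simp only [zero_add, h0, dist_self, zero_mul] at this
  exact dist_le_zero.1 this

lemma flow_unif {b : Eu n → Eu n} {K : NNReal} (hb : LipschitzWith K b)
    {X : ℝ → Eu n → Eu n} (hX : GAS b X) {C : Set (Eu n)} (hC : IsCompact C) {s : ℝ} (hs : 0 < s) :
    ∃ τ ≥ (0:ℝ), ∀ x ∈ C, ∀ t ≥ τ, ‖X t x‖ < s := by
  obtain ⟨h0, hd, hl, hst⟩ := id hX
  obtain ⟨d, hd0, hst⟩ := hst s hs
  refine hC.induction_on (p := fun C => ∃ τ ≥ (0:ℝ), ∀ x ∈ C, ∀ t ≥ τ, ‖X t x‖ < s)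
    ⟨0, le_rfl, by simp⟩ ?_ ?_ ?_
  · rintro s t hst ⟨τ, h1, h2⟩
    exact ⟨τ, h1, fun x hx => h2 x (hst hx)⟩
  · rintro s t ⟨τ, h1, h2⟩ ⟨τ', h1', h2'⟩
    refine ⟨max τ τ', le_max_of_le_left h1, ?_⟩
    rintro x (hx | hx) t ht
    · exact h2 x hx t (le_trans (le_max_left _ _) ht)
    · exact h2' x hx t (le_trans (le_max_right _ _) ht)
  · intro x _
    have h1 : ∀ᶠ t in atTop, ‖X t x‖ < d := by
      have := (hl x).norm
      rw [norm_zero] at this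
      exact this.eventually (gt_mem_nhds hd0)
    obtain ⟨τ, hτ, hτ0⟩ := (h1.and (eventually_ge_atTop 0)).exists
    have hcont : Continuous (fun y => X τ y) := by
      have : LipschitzWith (Real.exp (K * τ)).toNNReal (fun y => X τ y) := by
        refine LipschitzWith.of_dist_le_mul fun y z => ?_
        have := flow_lip hb (hd y) (hd z) hτ0
        rw [Real.coe_toNNReal _ (Real.exp_pos _).le, mul_comm]
        simpa [h0] using this
      exact this.continuous
    refine ⟨{y | ‖X τ y‖ < d}, ?_, τ, hτ0, ?_⟩
    · apply mem_nhdsWithin_of_mem_nhds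
      exact (isOpen_lt hcont.norm continuous_const).mem_nhds hτ
    · intro y hy t ht
      have := flow_semi hb hX y τ (sub_nonneg.2 ht)
      rw [sub_add_cancel] at this
      rw [this]
      exact hst _ hy _ (sub_nonneg.2 ht)

lemma exists_lyap {b : Eu n → Eu n} {K : NNReal} (hb : LipschitzWith K b)
    {X : ℝ → Eu n → Eu n} (hX : GAS b X) {C : Set (Eu n)} (hC : IsCompact C) {s : ℝ} (hs : 0 < s) :
    ∃ (L : Eu n → ℝ) (M : NNReal), LipschitzWith M L ∧ (∀ x, 0 ≤ L x) ∧ L 0 = 0 ∧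
      ∀ x ∈ C, DifferentiableAt ℝ L x → fderiv ℝ L x (b x) = -max (‖x‖ - s) 0 := by
  obtain ⟨τ, hτ0, hτ⟩ := flow_unif hb hX hC hs
  obtain ⟨h0, hd, hl, hst⟩ := id hX
  have hcX : ∀ x, Continuous fun t => X t x := fun x =>
    continuous_iff_continuousAt.2 fun t => (hd x t).continuousAt
  set ψ : Eu n → ℝ := fun x => max (‖x‖ - s) 0 with hψ
  have hψc : Continuous ψ := by fun_prop
  have hψ0 : ∀ x, 0 ≤ ψ x := fun x => le_max_right _ _
  have hψl : ∀ x y, ψ x - ψ y ≤ dist x y := by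
    intro x y
    have h1 : ‖x‖ ≤ ‖y‖ + dist x y := by
      rw [dist_eq_norm]; linarith [norm_sub_norm_le x y]
    have h2 : ψ x ≤ ψ y + dist x y := by
      apply max_le
      · have := le_max_left (‖y‖ - s) 0
        simp only [hψ]; linarith
      · have := hψ0 y
        have := dist_nonneg (x := x) (y := y)
        linarith
    linarith
  have hcψ : ∀ x, Continuous fun t => ψ (X t x) := fun x => hψc.comp (hcX x)
  set L : Eu n → ℝ := fun x => ∫ t in (0:ℝ)..τ, ψ (X t x) with hL
  have hLl : ∀ x y, L x - L y ≤ τ * Real.exp (K * τ) * dist x y := by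
    intro x y
    simp only [hL]
    rw [← intervalIntegral.integral_sub ((hcψ x).intervalIntegrable _ _)
      ((hcψ y).intervalIntegrable _ _)]
    have : ∫ t in (0:ℝ)..τ, (ψ (X t x) - ψ (X t y)) ≤
        ∫ t in (0:ℝ)..τ, Real.exp (K * τ) * dist x y := by
      apply intervalIntegral.integral_mono_on hτ0
      · exact ((hcψ x).sub (hcψ y)).intervalIntegrable _ _
      · exact continuous_const.intervalIntegrable _ _
      · intro t ht
        refine (hψl _ _).trans ?_
        refine (flow_lip hb (hd x) (hd y) ht.1).trans ?_
        rw [h0, h0, mul_comm]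
        gcongr
        exact ht.2
    refine this.trans ?_
    rw [intervalIntegral.integral_const]
    simp [mul_assoc]
  refine ⟨L, (τ * Real.exp (K * τ)).toNNReal, ?_, ?_, ?_, ?_⟩
  · apply LipschitzWith.of_le_add_mul
    intro x y
    rw [Real.coe_toNNReal _ (by positivity)]
    linarith [hLl x y]
  · intro x
    exact intervalIntegral.integral_nonneg hτ0 fun t _ => hψ0 _
  · have : ∀ t ∈ uIcc 0 τ, ψ (X t 0) = 0 := by
      intro t ht
      rw [uIcc_of_le hτ0] at ht
      obtain ⟨d, hd0, hst⟩ := hst s hs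
      have := hst 0 (by simpa using hd0) t ht.1
      simp only [hψ]
      exact max_eq_right (by linarith)
    simp only [hL]
    rw [intervalIntegral.integral_congr (g := fun _ => (0:ℝ)) this]
    simp
  · intro x hx hdx
    have key : ∀ h, L (X h x) = (∫ t in (0:ℝ)..(τ + h), ψ (X t x)) - ∫ t in (0:ℝ)..h, ψ (X t x) := by
      intro h
      simp only [hL]
      rw [intervalIntegral.integral_congr (g := fun t => ψ (X (t + h) x))
        (fun t ht => by
          rw [uIcc_of_le hτ0] at ht
          simp only
          rw [flow_semi hb hX x h ht.1])]
      rw [intervalIntegral.integral_comp_add_right (fun t => ψ (X t x)), zero_add]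
      rw [← intervalIntegral.integral_interval_sub_left] <;> exact (hcψ x).intervalIntegrable _ _
    have d1 : HasDerivAt (fun h => L (X h x)) (ψ (X τ x) - ψ x) 0 := by
      have e : (fun h => L (X h x)) = fun h => (∫ t in (0:ℝ)..(τ + h), ψ (X t x)) - ∫ t in (0:ℝ)..h, ψ (X t x) :=
        funext key
      rw [e]
      have g1 : ∀ u, HasDerivAt (fun u => ∫ t in (0:ℝ)..u, ψ (X t x)) (ψ (X u x)) u := fun u =>
        (hcψ x).integral_hasStrictDerivAt 0 u |>.hasDerivAt
      have g2 := (g1 (τ + 0)).comp_const_add τ 0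
      have g3 := g2.sub (g1 0)
      rw [add_zero, h0] at g3
      exact g3
    have d2 : HasDerivAt (fun h => L (X h x)) (fderiv ℝ L x (b x)) 0 := by
      have a1 := hd x 0
      rw [h0] at a1
      have a2 : HasFDerivAt L (fderiv ℝ L x) (X 0 x) := by rw [h0]; exact hdx.hasFDerivAt
      exact a2.comp_hasDerivAt (0:ℝ) a1
    have := d2.unique d1
    rw [this]
    have : ψ (X τ x) = 0 := by
      have := hτ x hx τ le_rfl
      exact max_eq_right (by linarith)
    rw [this]; simp [hψ]

/-! ### Maximum principle -/

lemma hess_nonpos {G : Eu n → ℝ} {x : Eu n} (hG : ContDiffAt ℝ 2 G x) (hm : IsLocalMax G x)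
    (e : Eu n) : fderiv ℝ (fderiv ℝ G) x e e ≤ 0 := by
  by_contra! hc
  set c := fderiv ℝ (fderiv ℝ G) x e e with hcdef
  set ℓ : ℝ → Eu n := fun s => x + s • e with hℓ
  have hℓd : ∀ s, HasDerivAt ℓ e s := by
    intro s
    have := ((hasDerivAt_id s).smul_const e).const_add x
    rw [one_smul] at this
    exact this
  have hℓ0 : ℓ 0 = x := by simp [hℓ]
  have hℓc : Tendsto ℓ (𝓝 0) (𝓝 x) := by
    have := (hℓd 0).continuousAt.tendsto
    rwa [hℓ0] at this
  have hev : ∀ᶠ y in 𝓝 x, DifferentiableAt ℝ G y := by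
    have := hG.eventually (by simp)
    filter_upwards [this] with y hy
    exact hy.differentiableAt (by norm_num)
  set g : ℝ → ℝ := fun s => G (ℓ s) - c / 4 * s ^ 2 with hg
  have hgd : ∀ᶠ s in 𝓝 (0:ℝ), HasDerivAt g (fderiv ℝ G (ℓ s) e - c / 2 * s) s := by
    filter_upwards [hℓc.eventually hev] with s hs
    have h1 := hs.hasFDerivAt.comp_hasDerivAt s (hℓd s)
    have h2 := ((hasDerivAt_pow 2 s).const_mul (c / 4))
    have h3 := h1.sub h2
    refine h3.congr_deriv ?_
    norm_num; ring
  have hgd1 : deriv g =ᶠ[𝓝 0] fun s => fderiv ℝ G (ℓ s) e - c / 2 * s := by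
    filter_upwards [hgd] with s hs using hs.deriv
  have hdd : HasDerivAt (fun s => fderiv ℝ G (ℓ s) e - c / 2 * s) (c - c / 2) 0 := by
    have h1 : DifferentiableAt ℝ (fderiv ℝ G) (ℓ 0) := by
      rw [hℓ0]
      exact (hG.fderiv_right (m := 1) (by norm_num)).differentiableAt (by norm_num)
    have h2 := h1.hasFDerivAt.comp_hasDerivAt (0:ℝ) (hℓd 0)
    have h3 := (h2.clm_apply (hasDerivAt_const (0:ℝ) e))
    have h4 := h3.sub ((hasDerivAt_id (0:ℝ)).const_mul (c / 2))
    refine HasDerivAt.congr_deriv (f := fun s => fderiv ℝ G (ℓ s) e - c / 2 * s) h4 ?_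
    simp [hcdef, hℓ0]
  have hpos : 0 < deriv (deriv g) 0 := by
    rw [hgd1.deriv_eq, hdd.deriv]; linarith
  have hz : deriv g 0 = 0 := by
    rw [hgd1.self_of_nhds]; simp only [hℓ0, hm.fderiv_eq_zero]; simp
  have hmin := isLocalMin_of_deriv_deriv_pos hpos hz hgd.self_of_nhds.continuousAt
  have hmax : ∀ᶠ s in 𝓝 (0:ℝ), G (ℓ s) ≤ G x := hℓc.eventually hm
  have hall : ∀ᶠ s in 𝓝 (0:ℝ), s = 0 := by
    filter_upwards [hmin, hmax] with s h1 h2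
    simp only [hg, hℓ0] at h1
    have : c / 4 * s ^ 2 ≤ 0 := by nlinarith
    have h3 : s ^ 2 ≤ 0 := by
      by_contra! h
      have : 0 < c / 4 * s ^ 2 := by positivity
      linarith
    nlinarith [sq_nonneg s, pow_eq_zero_iff (two_ne_zero) |>.1 (le_antisymm h3 (sq_nonneg s))]
  obtain ⟨r, hr, hr'⟩ := Metric.eventually_nhds_iff.1 hall
  have := hr' (y := r / 2) (by rw [Real.dist_eq, sub_zero, abs_of_pos (by positivity)]; linarith)
  linarith

lemma mquad_sH {u : Eu n → ℝ → ℝ} {x : Eu n} {t : ℝ}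
    (hu : ContDiffAt ℝ 2 (fun y => u y t) x) (e : Eu n) :
    mquad (sH u x t) e = fderiv ℝ (fderiv ℝ (fun y => u y t)) x e e := by
  set v := fun y => u y t with hv
  have h1 : DifferentiableAt ℝ (fderiv ℝ v) x :=
    (hu.fderiv_right (m := 1) (by norm_num)).differentiableAt (by norm_num)
  have h2 : ∀ i j, sH u x t i j = fderiv ℝ (fderiv ℝ v) x (EuclideanSpace.single j 1)
      (EuclideanSpace.single i 1) := by
    intro i j
    have e1 : (fun y => sG u y t i) = fun y => fderiv ℝ v y (EuclideanSpace.single i 1) := by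
      funext y
      rw [fderiv_eq_dotp]
      simp [dotp, sG, hv]
    unfold sH
    rw [e1]
    have h3 := h1.hasFDerivAt.clm_apply (hasFDerivAt_const (EuclideanSpace.single i (1:ℝ)) x)
    rw [h3.fderiv]
    simp
  have he : e = ∑ i, e i • EuclideanSpace.single i (1:ℝ) := by
    ext j
    simp [Finset.sum_apply, Pi.single_apply]
  conv_rhs => rw [he]
  simp only [map_sum, map_smul, _root_.sum_apply, _root_.smul_apply]
  unfold mquad
  rw [Finset.sum_comm]
  simp only [h2, smul_eq_mul, Finset.mul_sum]
  rw [Finset.sum_comm]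
  refine Finset.sum_congr rfl fun i _ => Finset.sum_congr rfl fun j _ => by ring

/-- first and second derivative of the barrier `C₀ exp((W - m)/ε)`. -/
lemma barrier_deriv {W : Eu n → ℝ} (hW : ContDiff ℝ 2 W) (C m ε : ℝ) (x e : Eu n) :
    ContDiff ℝ 2 (fun y => C * Real.exp ((W y - m) / ε)) ∧
    fderiv ℝ (fun y => C * Real.exp ((W y - m) / ε)) x
      = (C * Real.exp ((W x - m) / ε) / ε) • fderiv ℝ W x ∧
    fderiv ℝ (fderiv ℝ (fun y => C * Real.exp ((W y - m) / ε))) x e e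
      = (C * Real.exp ((W x - m) / ε) / ε) * (fderiv ℝ (fderiv ℝ W) x e e
        + (1 / ε) * (fderiv ℝ W x e) ^ 2) := by
  set z : Eu n → ℝ := fun y => C * Real.exp ((W y - m) / ε) with hz
  have hWd : ∀ y, HasFDerivAt W (fderiv ℝ W y) y := fun y =>
    (hW.differentiable (by norm_num) y).hasFDerivAt
  have h1 : ∀ y, HasFDerivAt z ((z y / ε) • fderiv ℝ W y) y := by
    intro y
    have a1 := (((hWd y).sub_const m).mul_const ε⁻¹).exp.const_mul C
    simp only [← div_eq_mul_inv] at a1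
    refine a1.congr_fderiv ?_
    ext v
    simp [hz]
    ring
  have h1' : fderiv ℝ z = fun y => (z y / ε) • fderiv ℝ W y := funext fun y => (h1 y).fderiv
  refine ⟨by fun_prop, (h1 x).fderiv, ?_⟩
  rw [h1']
  have hWdd : HasFDerivAt (fderiv ℝ W) (fderiv ℝ (fderiv ℝ W) x) x :=
    ((hW.fderiv_right (m := 1) (by norm_num)).differentiable (by norm_num) x).hasFDerivAt
  have h2 : HasFDerivAt (fun y => z y / ε) (ε⁻¹ • ((z x / ε) • fderiv ℝ W x)) x := by
    have := (h1 x).mul_const ε⁻¹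
    simp only [← div_eq_mul_inv] at this
    exact this
  have h3 := h2.smul hWdd
  have h4 : fderiv ℝ (fun y => (z y / ε) • fderiv ℝ W y) x = _ := HasFDerivAt.fderiv h3
  rw [h4]
  simp
  ring

lemma touch {θ ε c κ C m : ℝ} (hθ : 0 < θ) (hε : 0 < ε) (hC : 0 ≤ C)
    {α : Eu n → Matrix (Fin n) (Fin n) ℝ} {b : Eu n → Eu n} {A : Matrix (Fin n) (Fin n) ℝ}
    {u : Eu n → ℝ → ℝ} {W : Eu n → ℝ} (hW : ContDiff ℝ 2 W) {x : Eu n} {t : ℝ}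
    (hu : ContDiffAt ℝ 2 (fun y => u y t) x)
    (hmax : IsLocalMax (fun y => u y t - C * Real.exp ((W y - m) / ε)) x)
    (hc0 : 0 ≤ c)
    (hc : ‖fderiv ℝ (fderiv ℝ W) x‖ ≤ c) (hA : memS θ A) (hAα : mle A (α x))
    (hsub : κ ≤ ε * trMul A (sH u x t) + dotp (b x) (sG u x t)) :
    κ ≤ (C * Real.exp ((W x - m) / ε) / ε) *
      (ε * (c * (n * θ⁻¹)) + Ham α b x (gradient W x)) := by
  obtain ⟨hz2, hz1, -⟩ := barrier_deriv hW C m ε x 0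
  have hzz := fun e => (barrier_deriv hW C m ε x e).2.2
  set z : Eu n → ℝ := fun y => C * Real.exp ((W y - m) / ε) with hz
  set v : Eu n → ℝ := fun y => u y t with hv
  set q : ℝ := C * Real.exp ((W x - m) / ε) / ε with hq
  have hq0 : 0 ≤ q := by positivity
  have hdv : ∀ᶠ y in 𝓝 x, DifferentiableAt ℝ v y := by
    filter_upwards [hu.eventually (by simp)] with y hy
    exact hy.differentiableAt (by norm_num)
  have hdz : ∀ y, DifferentiableAt ℝ z y := fun y => hz2.differentiable (by norm_num) y
  have hfd : fderiv ℝ v x = q • fderiv ℝ W x := by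
    have h1 : fderiv ℝ (v - z) x = 0 := hmax.fderiv_eq_zero
    rw [fderiv_sub hdv.self_of_nhds (hdz x), sub_eq_zero] at h1
    rw [h1, hz1]
  have hgr : sG u x t = q • gradient W x := by
    unfold sG gradient
    rw [← hv, hfd]; simp
  have hH : ∀ e, mquad (sH u x t) e ≤
      mquad (fun i j => (q * c) * (if i = j then 1 else 0) + (q / ε) * (gradient W x i * gradient W x j)) e := by
    intro e
    rw [mquad_sH hu, mquad_model]
    have h1 := hess_nonpos (hu.sub hz2.contDiffAt) hmax e
    have h2 : fderiv ℝ (fderiv ℝ (v - z)) x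
        = fderiv ℝ (fderiv ℝ v) x - fderiv ℝ (fderiv ℝ z) x := by
      have e1 : fderiv ℝ (v - z) =ᶠ[𝓝 x] fderiv ℝ v - fderiv ℝ z := by
        filter_upwards [hdv] with y hy
        exact fderiv_sub hy (hdz y)
      rw [e1.fderiv_eq]
      refine fderiv_sub ?_ ?_
      · exact (hu.fderiv_right (m := 1) (by norm_num)).differentiableAt (by norm_num)
      · exact (hz2.fderiv_right (m := 1) (by norm_num)).differentiable (by norm_num) x
    have h1' : fderiv ℝ (fderiv ℝ (v - z)) x e e ≤ 0 := h1
    rw [h2] at h1'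
    have h3 : fderiv ℝ (fderiv ℝ v) x e e ≤ fderiv ℝ (fderiv ℝ z) x e e := by
      have : (fderiv ℝ (fderiv ℝ v) x - fderiv ℝ (fderiv ℝ z) x) e e
        = fderiv ℝ (fderiv ℝ v) x e e - fderiv ℝ (fderiv ℝ z) x e e := rfl
      linarith
    refine h3.trans ?_
    rw [hzz e, ← fderiv_eq_dotp]
    have h4 : fderiv ℝ (fderiv ℝ W) x e e ≤ c * ‖e‖ ^ 2 := by
      have a1 := (fderiv ℝ (fderiv ℝ W) x).le_opNorm₂ e e
      have a2 := le_abs_self (fderiv ℝ (fderiv ℝ W) x e e)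
      rw [← Real.norm_eq_abs] at a2
      calc _ ≤ _ := a2.trans a1
        _ = ‖fderiv ℝ (fderiv ℝ W) x‖ * ‖e‖ ^ 2 := by ring
        _ ≤ _ := by gcongr
    have := mul_le_mul_of_nonneg_left h4 hq0
    calc _ = q * fderiv ℝ (fderiv ℝ W) x e e + q / ε * (fderiv ℝ W x e) ^ 2 := by ring
      _ ≤ _ := by linarith
  have htr := trMul_le_trMul hθ hA hH
  rw [trMul_model] at htr
  have h5 := trace_le hA
  have h6 := hAα (gradient W x)
  have h7 : q * c * ∑ i, A i i ≤ q * c * (n * θ⁻¹) := by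
    gcongr
  have h8 : q / ε * mquad A (gradient W x) ≤ q / ε * mquad (α x) (gradient W x) := by
    gcongr
  have h9 : ε * trMul A (sH u x t) ≤ ε * (q * c * (n * θ⁻¹) + q / ε * mquad (α x) (gradient W x)) := by
    gcongr; linarith
  have h10 : dotp (b x) (sG u x t) = q * dotp (b x) (gradient W x) := by
    rw [hgr]; simp [dotp, Finset.mul_sum]; exact Finset.sum_congr rfl fun _ _ => by ring
  calc κ ≤ _ := hsub
    _ ≤ ε * (q * c * (n * θ⁻¹) + q / ε * mquad (α x) (gradient W x)) + q * dotp (b x) (gradient W x) := by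
        rw [h10]; linarith
    _ = _ := by
        unfold Ham; field_simp; ring

lemma deriv_ge_of_left_max {g : ℝ → ℝ} {t κ : ℝ} (ht : 0 < t) (hg : DifferentiableAt ℝ g t)
    (hm : ∀ s ∈ Icc 0 t, g s - κ * s ≤ g t - κ * t) : κ ≤ deriv g t := by
  have h1 := hasDerivAt_iff_tendsto_slope.1 hg.hasDerivAt
  have h2 : Tendsto (slope g t) (𝓝[<] t) (𝓝 (deriv g t)) :=
    h1.mono_left (nhdsWithin_mono _ fun s hs => ne_of_lt hs)
  refine ge_of_tendsto h2 ?_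
  have h3 : Ioo 0 t ∈ 𝓝[<] t := Ioo_mem_nhdsLT ht
  filter_upwards [h3] with s hs
  have := hm s ⟨hs.1.le, hs.2.le⟩
  rw [slope_def_field, le_div_iff_of_neg (by linarith [hs.2])]
  linarith

lemma compare {θ ε c κ C m : ℝ} (hθ : 0 < θ) (hε : 0 < ε) (hC : 0 < C) (hκ : 0 ≤ κ)
    {Ω : Set (Eu n)} (hΩ : IsOpen Ω) (hΩb : Bornology.IsBounded Ω)
    {α : Eu n → Matrix (Fin n) (Fin n) ℝ} {b : Eu n → Eu n}
    {A : Eu n → ℝ → Matrix (Fin n) (Fin n) ℝ} {T : ℝ≥0∞}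
    {u : Eu n → ℝ → ℝ} {W : Eu n → ℝ} (hW : ContDiff ℝ 2 W)
    (hK : ∀ x ∈ closure Ω, W x ≤ m → x ∈ Ω)
    (hu : Classical21 u Ω T) (hs : SubsolL ε A b u Ω T) (hA : MatC θ A Ω T)
    (hAα : ∀ x ∈ Ω, ∀ t : ℝ, 0 < t → ENNReal.ofReal t < T → mle (A x t) (α x))
    (hu0 : ∀ x ∈ Ω, W x ≤ m → u x 0 ≤ 0)
    (huC : ∀ x ∈ Ω, ∀ t : ℝ, 0 < t → ENNReal.ofReal t < T → u x t ≤ C)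
    (hc0 : 0 ≤ c) (hc : ∀ x ∈ Ω, W x ≤ m → ‖fderiv ℝ (fderiv ℝ W) x‖ ≤ c)
    (hstr : ∀ x ∈ Ω, W x ≤ m → (C * Real.exp ((W x - m) / ε) / ε) *
      (ε * (c * (n * θ⁻¹)) + Ham α b x (gradient W x)) < κ)
    {x : Eu n} (hx : x ∈ Ω) (hxm : W x ≤ m) {t : ℝ} (ht : 0 ≤ t) (htT : ENNReal.ofReal t < T) :
    u x t ≤ C * Real.exp ((W x - m) / ε) + κ * t := by
  by_contra! hcon
  set K : Set (Eu n) := closure Ω ∩ {y | W y ≤ m} with hKdef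
  have hKc : IsCompact K :=
    hΩb.isCompact_closure.inter_right (isClosed_le hW.continuous continuous_const)
  have hPc : IsCompact (K ×ˢ Icc 0 t) := hKc.prod isCompact_Icc
  set F : Eu n × ℝ → ℝ := fun p => u p.1 p.2 - C * Real.exp ((W p.1 - m) / ε) - κ * p.2 with hF
  have hWc := hW.continuous
  have hFc : ContinuousOn F (K ×ˢ Icc 0 t) := by
    have h1 : ContinuousOn (fun p : Eu n × ℝ => u p.1 p.2) (K ×ˢ Icc 0 t) := by
      refine hu.1.mono ?_
      rintro ⟨y, s⟩ ⟨hy, hs⟩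
      exact ⟨hy.1, hs.1, (ENNReal.ofReal_le_ofReal hs.2).trans htT.le⟩
    have h2 : Continuous (fun p : Eu n × ℝ => C * Real.exp ((W p.1 - m) / ε)) := by fun_prop
    have h3 : Continuous (fun p : Eu n × ℝ => κ * p.2) := by fun_prop
    exact (h1.sub h2.continuousOn).sub h3.continuousOn
  have hne : (x, t) ∈ K ×ˢ Icc 0 t := ⟨⟨subset_closure hx, hxm⟩, ht, le_rfl⟩
  obtain ⟨⟨y, s⟩, ⟨hy, hs01⟩, hmax⟩ := hPc.exists_isMaxOn ⟨_, hne⟩ hFc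
  have hpos : 0 < F (y, s) := lt_of_lt_of_le (by simp only [hF]; linarith) (hmax hne)
  simp only [hF] at hpos
  have hyΩ : y ∈ Ω := hK y hy.1 hy.2
  have hsT : ENNReal.ofReal s < T := (ENNReal.ofReal_le_ofReal hs01.2).trans_lt htT
  have hz0 : 0 < C * Real.exp ((W y - m) / ε) := by positivity
  have hs0 : 0 < s := by
    rcases hs01.1.eq_or_lt with h | h
    · simp only at h
      have := hu0 y hyΩ hy.2
      subst h
      linarith
    · exact h
  have hWy : W y < m := by
    refine lt_of_le_of_ne hy.2 fun h => ?_
    have := huC y hyΩ s hs0 hsT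
    rw [h] at hpos
    simp at hpos
    have := mul_nonneg hκ hs0.le
    linarith
  have hreg := hu.2.1 y hyΩ s hs0 hsT
  have hloc : IsLocalMax (fun y => u y s - C * Real.exp ((W y - m) / ε)) y := by
    have e1 : ∀ᶠ w in 𝓝 y, w ∈ Ω := hΩ.mem_nhds hyΩ
    have e2 : ∀ᶠ w in 𝓝 y, W w < m := hWc.continuousAt.eventually (gt_mem_nhds hWy)
    filter_upwards [e1, e2] with w h1 h2
    have := hmax (show (w, s) ∈ K ×ˢ Icc 0 t from ⟨⟨subset_closure h1, h2.le⟩, hs01⟩)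
    simp only [hF, mem_setOf_eq] at this
    linarith
  have htd : κ ≤ tD u y s := by
    refine deriv_ge_of_left_max hs0 hreg.2 fun s' hs' => ?_
    have := hmax (show (y, s') ∈ K ×ˢ Icc 0 t from ⟨hy, hs'.1, hs'.2.trans hs01.2⟩)
    simp only [hF, mem_setOf_eq] at this
    linarith
  have := touch hθ hε hC.le hW hreg.1 hloc hc0 (hc y hyΩ hy.2)
    (hA.2 (y, s) ⟨hy.1, hs0.le, hsT.le⟩) (hAα y hyΩ s hs0 hsT) (htd.trans (hs y hyΩ s hs0 hsT))
  linarith [hstr y hyΩ hy.2]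

lemma exists_U {θ B m d : ℝ} (hθ : 0 < θ) (hB : 0 ≤ B) {Ω : Set (Eu n)} (hΩ : IsOpen Ω)
    (hΩb : Bornology.IsBounded Ω) (h0 : (0 : Eu n) ∈ Ω)
    {α : Eu n → Matrix (Fin n) (Fin n) ℝ} {b : Eu n → Eu n} {Kb : NNReal}
    (hα : ContinuousOn α Ω) (hb : LipschitzWith Kb b) (hgas : ∃ X, GAS b X)
    (hm : ∀ x ∈ Ω, memS θ (α x)) (hbB : ∀ x ∈ Ω, ‖b x‖ ≤ B)
    (hd : 0 < d) (hdm : d ≤ m) (hfr : ∀ x ∈ frontier Ω, m < Vq α b Ω x) :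
    ∃ (U : Eu n → ℝ) (K : NNReal) (s μ : ℝ), LipschitzWith K U ∧ U 0 = 0 ∧ 0 < s ∧ 0 < μ ∧
      2 * s * K ≤ d ∧ (∀ x ∈ closure Ω, m < Vq α b Ω x → m - 2 * d ≤ U x) ∧
      ∀ᵐ z : Eu n, z ∈ Ω → Ham α b z (gradient U z) ≤ μ * (s / 4 - max (‖z‖ - s) 0) := by
  obtain ⟨U₀, ⟨⟨K₀, hK₀⟩, hU00, hvisc⟩, hU₀⟩ :=
    exists_U0 hθ hB hΩ hΩb h0 hα hb.continuous hm hbB hd hfr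
  obtain ⟨X, hX⟩ := hgas
  have hm0 : 0 < m := hd.trans_le hdm
  set s : ℝ := d / (2 * (K₀ + 1)) with hs
  have hs0 : 0 < s := by positivity
  obtain ⟨L, M, hLM, hL0, hL00, hLd⟩ := exists_lyap hb hX hΩb.isCompact_closure hs0
  set D : ℝ := 1 + M + 4 * (θ⁻¹ * M ^ 2) / s with hD
  have hD0 : 0 < D := by positivity
  set η : ℝ := 1 / D with hη
  have hη0 : 0 < η := by positivity
  have hηM : η * M ≤ 1 := by
    rw [hη, one_div_mul_eq_div, div_le_one hD0, hD]
    have : 0 ≤ 4 * (θ⁻¹ * (M:ℝ) ^ 2) / s := by positivity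
    linarith
  have hηs : η * (θ⁻¹ * M ^ 2) ≤ s / 4 := by
    rw [hη, one_div_mul_eq_div, div_le_iff₀ hD0, hD]
    have h1 : s / 4 * (1 + M + 4 * (θ⁻¹ * M ^ 2) / s) = s / 4 * (1 + M) + θ⁻¹ * M ^ 2 := by
      field_simp
    rw [h1]
    have : 0 ≤ s / 4 * (1 + M) := by positivity
    linarith
  set l : ℝ := d / m with hl
  have hl0 : 0 < l := by positivity
  have hl1 : l ≤ 1 := (div_le_one hm0).2 hdm
  have hlm : l * m = d := by rw [hl]; field_simp
  set U : Eu n → ℝ := fun x => (1 - l) * U₀ x + l * (η * L x) with hU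
  refine ⟨U, K₀ + 1, s, l * η, ?_, ?_, hs0, by positivity, ?_, ?_, ?_⟩
  · apply LipschitzWith.of_le_add_mul
    intro x y
    have h1 := hK₀.le_add_mul x y
    have h2 := hLM.le_add_mul x y
    have h3 : η * L x ≤ η * L y + dist x y := by
      have a1 := mul_le_mul_of_nonneg_left h2 hη0.le
      have a2 := mul_le_mul_of_nonneg_right hηM (dist_nonneg (x := x) (y := y))
      nlinarith
    have h4 := mul_le_mul_of_nonneg_left h1 (sub_nonneg.2 hl1)
    have h5 := mul_le_mul_of_nonneg_left h3 hl0.le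
    have h6 : 0 ≤ dist x y := dist_nonneg
    have h7 : (0:ℝ) ≤ K₀ := K₀.2
    have h8 : (0:ℝ) ≤ K₀ * dist x y := by positivity
    push_cast
    simp only [hU]
    nlinarith
  · simp [hU, hU00, hL00]
  · push_cast
    rw [hs]
    apply le_of_eq
    field_simp
  · intro x hx hxm
    have h1 := hU₀ x hx hxm
    have h2 := mul_le_mul_of_nonneg_left h1 (sub_nonneg.2 hl1)
    have h3 : 0 ≤ l * (η * L x) := mul_nonneg hl0.le (mul_nonneg hη0.le (hL0 x))
    have h4 : 0 ≤ l * d := by positivity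
    simp only [hU]
    nlinarith
  · filter_upwards [hK₀.ae_differentiableAt, hLM.ae_differentiableAt] with z hz1 hz2 hzΩ
    have hg : gradient U z = (1 - l) • gradient U₀ z + l • (η • gradient L z) := by
      have h1 : HasFDerivAt U ((1 - l) • fderiv ℝ U₀ z + l • (η • fderiv ℝ L z)) z :=
        (hz1.hasFDerivAt.const_mul (1 - l)).add ((hz2.hasFDerivAt.const_mul η).const_mul l)
      unfold gradient
      rw [h1.fderiv]
      simp
    rw [hg]
    have h1 := Ham_convex hθ α b z (hm z hzΩ) (gradient U₀ z) (η • gradient L z) l hl0.le hl1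
    have h2 := visc_diff hΩ hα hb.continuous hK₀.continuous hvisc hzΩ hz1
    have h3 : Ham α b z (η • gradient L z) ≤ η * (s / 4 - max (‖z‖ - s) 0) := by
      unfold Ham
      have a1 := (((hm z hzΩ).2 (η • gradient L z)).2)
      have a2 : ‖η • gradient L z‖ = η * ‖fderiv ℝ L z‖ := by
        rw [norm_smul, Real.norm_of_nonneg hη0.le, norm_gradient_eq]
      have a3 : ‖fderiv ℝ L z‖ ≤ M := norm_fderiv_le_of_lipschitz ℝ hLM
      have a4 : dotp (b z) (η • gradient L z) = η * fderiv ℝ L z (b z) := by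
        rw [fderiv_eq_dotp]; simp [dotp, Finset.mul_sum]
        exact Finset.sum_congr rfl fun _ _ => by ring
      have a5 := hLd z (subset_closure hzΩ) hz2
      rw [a4, a5]
      rw [a2] at a1
      have a6 : θ⁻¹ * (η * ‖fderiv ℝ L z‖) ^ 2 ≤ θ⁻¹ * (η * M) ^ 2 := by gcongr
      have a7 : θ⁻¹ * (η * M) ^ 2 = η * (η * (θ⁻¹ * M ^ 2)) := by ring
      have a8 := mul_le_mul_of_nonneg_left hηs hη0.le
      linarith
    have h4 := mul_le_mul_of_nonneg_left h3 hl0.le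
    have h5 := mul_nonpos_of_nonneg_of_nonpos (sub_nonneg.2 hl1) h2
    linarith

lemma exists_W {θ B m d : ℝ} (hθ : 0 < θ) (hB : 0 ≤ B) {Ω : Set (Eu n)} (hΩ : IsOpen Ω)
    (hΩb : Bornology.IsBounded Ω) (h0 : (0 : Eu n) ∈ Ω)
    {α : Eu n → Matrix (Fin n) (Fin n) ℝ} {b : Eu n → Eu n} {Kb : NNReal}
    (hα : ContinuousOn α (closure Ω)) (hb : LipschitzWith Kb b) (hgas : ∃ X, GAS b X)
    (hm : ∀ x ∈ Ω, memS θ (α x)) (hbB : ∀ x ∈ Ω, ‖b x‖ ≤ B)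
    (hd : 0 < d) (hdm : d ≤ m) (hfr : ∀ x ∈ frontier Ω, m < Vq α b Ω x) :
    ∃ (W : Eu n → ℝ) (c₁ C₃ : ℝ), ContDiff ℝ 2 W ∧ 0 < c₁ ∧ 0 ≤ C₃ ∧ W 0 ≤ d ∧
      (∀ x ∈ closure Ω, W x ≤ m - 4 * d → x ∈ Ω ∧ Vq α b Ω x ≤ m) ∧
      (∀ x ∈ Ω, W x ≤ m - 4 * d → Ham α b x (gradient W x) ≤ -c₁ ∨
        (W x ≤ 2 * d ∧ Ham α b x (gradient W x) ≤ C₃)) := by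
  obtain ⟨U, K, s, μ, hUK, hU0, hs0, hμ0, hsK, hUm, hUH⟩ :=
    exists_U hθ hB hΩ hΩb h0 (hα.mono subset_closure) hb hgas hm hbB hd hdm hfr
  have hVU : ∀ x ∈ closure Ω, U x ≤ m - 3 * d → Vq α b Ω x ≤ m := by
    intro x hx h
    by_contra! hc
    linarith [hUm x hx hc]
  have hVΩ : ∀ x ∈ closure Ω, U x ≤ m - 3 * d → x ∈ Ω := by
    intro x hx h
    by_contra hc
    have : x ∈ frontier Ω := by
      rw [hΩ.frontier_eq]; exact ⟨hx, hc⟩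
    linarith [hfr x this, hVU x hx h]
  have hKc : IsCompact (closure Ω ∩ {x | U x ≤ m - 3 * d}) :=
    hΩb.isCompact_closure.inter_right (isClosed_le hUK.continuous continuous_const)
  obtain ⟨r1, hr1, hr1Ω⟩ := hKc.exists_thickening_subset_open hΩ
    (fun x hx => hVΩ x hx.1 hx.2)
  have hunif : UniformContinuousOn (fun z : Eu n × Eu n => Ham α b z.1 z.2)
      (closure Ω ×ˢ closedBall 0 K) := by
    refine (hΩb.isCompact_closure.prod (isCompact_closedBall _ _)).uniformContinuousOn_of_continuous ?_
    exact (continuousOn_Ham hα hb.continuous).mono (prod_mono le_rfl (subset_univ _))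
  obtain ⟨ρ, hρ, hρH⟩ := Metric.uniformContinuousOn_iff.1 hunif (μ * s / 8) (by positivity)
  set r : ℝ := min (min r1 ρ) (min (d / (K + 1)) (s / 8)) with hr
  have hr0 : 0 < r := by
    have : 0 < d / ((K:ℝ) + 1) := by positivity
    simp only [hr, lt_min_iff]
    exact ⟨⟨hr1, hρ⟩, this, by positivity⟩
  have hrr1 : r ≤ r1 := (min_le_left _ _).trans (min_le_left _ _)
  have hrρ : r ≤ ρ := (min_le_left _ _).trans (min_le_right _ _)
  have hrd : K * r ≤ d := by
    have h1 : r ≤ d / (K + 1) := (min_le_right _ _).trans (min_le_left _ _)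
    rw [le_div_iff₀ (by positivity)] at h1
    nlinarith
  have hrs : r ≤ s / 8 := (min_le_right _ _).trans (min_le_right _ _)
  obtain ⟨W, hW, hWU, hWf⟩ := mollify U K hUK r hr0
  have hWU' : ∀ x, W x ≤ U x + d ∧ U x ≤ W x + d := by
    intro x
    have := abs_le.1 (hWU x)
    constructor <;> linarith [this.1, this.2]
  have hball : ∀ x ∈ closure Ω, W x ≤ m - 4 * d → ball x r ⊆ Ω := by
    intro x hx h z hz
    apply hr1Ω
    have hx' : x ∈ closure Ω ∩ {x | U x ≤ m - 3 * d} := ⟨hx, by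
      show U x ≤ _
      linarith [(hWU' x).2]⟩
    exact Metric.mem_thickening_iff.2 ⟨x, hx', lt_of_lt_of_le hz hrr1⟩
  refine ⟨W, μ * s / 2, μ * s, hW, by positivity, by positivity, ?_, ?_, ?_⟩
  · have := (hWU' 0).1
    linarith
  · intro x hx h
    have : U x ≤ m - 3 * d := by linarith [(hWU' x).2]
    exact ⟨hVΩ x hx this, hVU x hx this⟩
  · intro x hx h
    have hb' := hball x (subset_closure hx) h
    have key : ∀ᵐ z : Eu n, z ∈ ball x r →
        Ham α b x (gradient U z) ≤ μ * (s / 4 - max (‖x‖ - s - s / 8) 0) + μ * s / 8 := by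
      filter_upwards [hUH] with z hz hzb
      have h1 := hz (hb' hzb)
      have hgK : gradient U z ∈ closedBall (0 : Eu n) K := by
        rw [mem_closedBall_zero_iff, norm_gradient_eq]
        exact norm_fderiv_le_of_lipschitz ℝ hUK
      have h2 := hρH (x, gradient U z) ⟨subset_closure hx, hgK⟩ (z, gradient U z)
        ⟨subset_closure (hb' hzb), hgK⟩ (by
          rw [Prod.dist_eq, dist_self, max_eq_left dist_nonneg, dist_comm]
          exact lt_of_lt_of_le hzb hrρ)
      rw [Real.dist_eq] at h2
      have h3 := (abs_lt.1 h2).2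
      simp only at h3
      have h4 : ‖x‖ - s / 8 ≤ ‖z‖ := by
        have a1 := norm_sub_norm_le x z
        rw [← dist_eq_norm, dist_comm] at a1
        have a2 : dist z x < r := hzb
        linarith
      have h5 : max (‖x‖ - s - s / 8) 0 ≤ max (‖z‖ - s) 0 := max_le_max (by linarith) le_rfl
      have h6 := mul_le_mul_of_nonneg_left h5 hμ0.le
      linarith
    have hH := mollify_Ham hθ α b (hm x hx) (fun v C => hWf x v C) _ key
    have hμs : 0 < μ * s := by positivity
    rcases le_or_gt (2 * s) ‖x‖ with hxs | hxs
    · left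
      have h5 : ‖x‖ - s - s / 8 ≤ max (‖x‖ - s - s / 8) 0 := le_max_left _ _
      have h6 := mul_le_mul_of_nonneg_left (show 7 * s / 8 ≤ max (‖x‖ - s - s / 8) 0 by linarith) hμ0.le
      linarith
    · right
      constructor
      · have h1 := hUK.le_add_mul x 0
        rw [hU0, dist_zero_right] at h1
        have h2 : (K:ℝ) * ‖x‖ ≤ K * (2 * s) := by gcongr
        have h3 := (hWU' x).1
        linarith
      · have h6 := mul_nonneg hμ0.le (le_max_right (‖x‖ - s - s / 8) 0)
        linarith

lemma Vq_nonneg {α : Eu n → Matrix (Fin n) (Fin n) ℝ} {b : Eu n → Eu n} {Ω : Set (Eu n)}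
    (hΩ : IsOpen Ω) (x : Eu n) : 0 ≤ Vq α b Ω x := by
  unfold Vq
  by_cases h : BddAbove {r | ∃ u : Eu n → ℝ, (∃ K : NNReal, LipschitzOnWith K u (closure Ω)) ∧
    u 0 = 0 ∧ ViscSub (Ham α b) Ω u ∧ r = u x}
  · obtain ⟨⟨K, hK⟩, h0, hv⟩ := Cls_zero (α := α) (b := b) hΩ
    exact le_csSup h ⟨_, ⟨K, hK.lipschitzOnWith⟩, h0, hv, rfl⟩
  · rw [Real.sSup_of_not_bddAbove h]

lemma exp_small {Q d ε : ℝ} (hQ : 0 ≤ Q) (hd : 0 < d) (hε : 0 < ε) :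
    Q / ε * Real.exp (-d / ε) ≤ 2 * Q * ε / d ^ 2 := by
  have h1 := Real.quadratic_le_exp_of_nonneg (x := d / ε) (by positivity)
  have h2 : (d / ε) ^ 2 / 2 ≤ Real.exp (d / ε) := by
    have : 0 < d / ε := by positivity
    linarith
  have h3 : Real.exp (-d / ε) ≤ 2 * ε ^ 2 / d ^ 2 := by
    rw [neg_div, Real.exp_neg]
    calc (Real.exp (d / ε))⁻¹ ≤ ((d / ε) ^ 2 / 2)⁻¹ := by gcongr
      _ = _ := by field_simp
  calc _ ≤ Q / ε * (2 * ε ^ 2 / d ^ 2) := by gcongr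
    _ = _ := by field_simp

end Helpers

/-- Proposition 4.1: the upper barrier bound valid up to times `exp((m−δ)/ε)`,
`m < M_α`. -/
theorem stmt12 {n : ℕ} (S : SettingB n) (α : Eu n → Matrix (Fin n) (Fin n) ℝ)
    (hαc : ContinuousOn α (closure S.Ω)) (hαm : ∀ x ∈ closure S.Ω, memS S.θ₀ (α x))
    (T : ℝ → ℝ≥0∞) (hT : ∀ ε, 0 < T ε)
    (C₀ m : ℝ) (hC₀ : 0 < C₀) (hm : 0 < m) (hmM : m < Mq α S.b S.Ω)
    (A : ℝ → Eu n → ℝ → Matrix (Fin n) (Fin n) ℝ) (u : ℝ → Eu n → ℝ → ℝ)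
    (hA : ∀ ε ∈ Set.Ioo (0:ℝ) 1, MatC S.θ₀ (A ε) S.Ω (T ε) ∧
      ∀ x ∈ S.Ω, ∀ t : ℝ, 0 < t → ENNReal.ofReal t < T ε → mle (A ε x t) (α x))
    (hu : ∀ ε ∈ Set.Ioo (0:ℝ) 1, Classical21 (u ε) S.Ω (T ε) ∧
      SubsolL ε (A ε) S.b (u ε) S.Ω (T ε) ∧
      (∀ x ∈ SigmaM α S.b S.Ω m, u ε x 0 ≤ 0) ∧
      (∀ x ∈ S.Ω, ∀ t : ℝ, 0 < t → ENNReal.ofReal t < T ε → u ε x t ≤ C₀))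
    (δ : ℝ) (hδ : 0 < δ) :
    ∃ ε₀ ∈ Set.Ioo (0:ℝ) 1, ∀ ε ∈ Set.Ioo (0:ℝ) ε₀,
      ∀ t : ℝ, 0 ≤ t → t < Real.exp ((m - δ) / ε) → ENNReal.ofReal t < T ε →
        u ε 0 t ≤ δ := by
  have hθ := S.θ₀_mem.1
  obtain ⟨hΩ, hΩb, -⟩ := S.domain
  obtain ⟨Kb, hKb⟩ := S.b_lip
  obtain ⟨B, hB⟩ := hΩb.isCompact_closure.exists_bound_of_continuousOn hKb.continuous.continuousOn
  have hfr : ∀ x ∈ frontier S.Ω, m < Vq α S.b S.Ω x := by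
    intro x hx
    refine hmM.trans_le (csInf_le ⟨0, ?_⟩ (mem_image_of_mem _ hx))
    rintro _ ⟨y, -, rfl⟩
    exact Vq_nonneg hΩ y
  set d : ℝ := min δ m / 10 with hd
  have hd0 : 0 < d := by
    have := lt_min hδ hm
    positivity
  have hdδ : 10 * d ≤ δ := by
    have := min_le_left δ m
    linarith
  have hdm : 10 * d ≤ m := by
    have := min_le_right δ m
    linarith
  obtain ⟨W, c₁, C₃, hW, hc₁, hC₃, hW0, hWΩ, hWH⟩ := exists_W (B := max B 0) (m := m) (d := d) hθ
    (le_max_right _ _) hΩ hΩb S.zero_mem hαc hKb S.b_gas (fun x hx => hαm x (subset_closure hx))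
    (fun x hx => (hB x (subset_closure hx)).trans (le_max_left _ _)) hd0 (by linarith) hfr
  obtain ⟨c', hc'⟩ := hΩb.isCompact_closure.exists_bound_of_continuousOn
    (f := fun x => fderiv ℝ (fderiv ℝ W) x)
    (((hW.fderiv_right (m := 1) (by norm_num)).continuous_fderiv (by norm_num)).continuousOn)
  set c : ℝ := max c' 0 with hc
  have hc0 : 0 ≤ c := le_max_right _ _
  set C₂ : ℝ := c * (n * S.θ₀⁻¹) with hC₂
  have hC₂0 : 0 ≤ C₂ := by positivity
  set Q : ℝ := C₀ * (C₂ + C₃ + 2) with hQ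
  have hQ0 : 0 < Q := by positivity
  refine ⟨min (1 / 2) (min (c₁ / (C₂ + 1)) (δ * d ^ 2 / (2 * Q))), ⟨?_, ?_⟩, ?_⟩
  · have h1 : 0 < c₁ / (C₂ + 1) := by positivity
    have h2 : 0 < δ * d ^ 2 / (2 * Q) := by positivity
    exact lt_min (by norm_num) (lt_min h1 h2)
  · exact (min_le_left _ _).trans_lt (by norm_num)
  intro ε hε t ht0 ht htT
  have hε0 : 0 < ε := hε.1
  have hε1 : ε < 1 := (hε.2.trans_le (min_le_left _ _)).trans (by norm_num)
  have hε2 : ε * C₂ ≤ c₁ := by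
    have h := hε.2.trans_le ((min_le_right _ _).trans (min_le_left _ _))
    rw [lt_div_iff₀ (by positivity)] at h
    nlinarith
  have hε3 : 2 * Q * ε / d ^ 2 ≤ δ := by
    have h := hε.2.trans_le ((min_le_right _ _).trans (min_le_right _ _))
    rw [lt_div_iff₀ (by positivity)] at h
    rw [div_le_iff₀ (by positivity)]
    linarith
  have hε01 : ε ∈ Set.Ioo (0:ℝ) 1 := ⟨hε0, hε1⟩
  obtain ⟨hA1, hA2⟩ := hA ε hε01
  obtain ⟨hu1, hu2, hu3, hu4⟩ := hu ε hε01
  set E : ℝ := Real.exp ((2 * d - (m - 4 * d)) / ε) with hE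
  have hE0 : 0 < E := Real.exp_pos _
  set κ : ℝ := C₀ * E / ε * (C₂ + C₃ + 1) with hκ
  have hκ0 : 0 < κ := by positivity
  have hstr : ∀ x ∈ S.Ω, W x ≤ m - 4 * d →
      (C₀ * Real.exp ((W x - (m - 4 * d)) / ε) / ε) *
      (ε * (c * (n * S.θ₀⁻¹)) + Ham α S.b x (gradient W x)) < κ := by
    intro x hx hxm
    rw [← hC₂]
    rcases hWH x hx hxm with h | ⟨h1, h2⟩
    · refine lt_of_le_of_lt ?_ hκ0
      apply mul_nonpos_of_nonneg_of_nonpos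
      · positivity
      · linarith
    · have h3 : ε * C₂ ≤ C₂ := by nlinarith
      calc _ ≤ (C₀ * Real.exp ((W x - (m - 4 * d)) / ε) / ε) * (C₂ + C₃) := by
            gcongr
        _ ≤ C₀ * E / ε * (C₂ + C₃) := by
            rw [hE]
            gcongr
        _ < κ := by
            rw [hκ]
            exact mul_lt_mul_of_pos_left (by linarith) (by positivity)
  have hfin := compare (T := T ε) hθ hε0 hC₀ hκ0.le hΩ hΩb hW (fun x hx h => (hWΩ x hx h).1) hu1 hu2 hA1
    hA2 (fun x hx h => hu3 x ⟨subset_closure hx, (hWΩ x (subset_closure hx) h).2⟩) hu4 hc0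
    (fun x hx _ => (hc' x (subset_closure hx)).trans (le_max_left _ _)) hstr S.zero_mem
    (by linarith) ht0 htT
  have g1 : Real.exp ((W 0 - (m - 4 * d)) / ε) ≤ Real.exp (-d / ε) := by
    gcongr
    linarith
  have g2 : E * t ≤ Real.exp (-d / ε) := by
    calc E * t ≤ E * Real.exp ((m - δ) / ε) := by gcongr
      _ = Real.exp ((2 * d - (m - 4 * d) + (m - δ)) / ε) := by
          rw [hE, ← Real.exp_add, add_div]
      _ ≤ _ := by
          gcongr
          linarith
  have g3 : κ * t ≤ C₀ / ε * (C₂ + C₃ + 1) * Real.exp (-d / ε) := by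
    calc κ * t = C₀ / ε * (C₂ + C₃ + 1) * (E * t) := by rw [hκ]; ring
      _ ≤ _ := by gcongr
  have g4 : C₀ ≤ C₀ / ε := by
    rw [le_div_iff₀ hε0]
    nlinarith
  have g5 : C₀ * Real.exp ((W 0 - (m - 4 * d)) / ε) ≤ C₀ / ε * Real.exp (-d / ε) := by
    gcongr
  have g6 := exp_small hQ0.le hd0 hε0
  have g7 : C₀ / ε * Real.exp (-d / ε) + C₀ / ε * (C₂ + C₃ + 1) * Real.exp (-d / ε)
      = Q / ε * Real.exp (-d / ε) := by
    rw [hQ]; ring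
  linarith
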